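/- Let C be the cycle of length n ≥ 3 on [n] and I_C its binomial edge ideal. Then S/I_C is approximately Cohen-Macaulay; in particular depth(S/I_C) ≥ n and dim(S/I_C) = n + 1. -/

import Mathlib

/-!
Write `g_{ij} = x_i y_j - x_j y_i`, let `P` be the ideal of all `g_{ij}` (the ideal of the complete
graph) and `I_C` that of the cycle.

**Depth.** Lower bounds for the depth are handled as vanishing of `Ext^i(S/𝔪, -)` (`DepthGE`), which
behaves well in exact sequences, and are converted to regular sequences at the very end
(`le_depth`). The bound `depth S/I_C ≥ n` is proved more generally for a complete graph on `A` with
a path from `a ∈ A` back to another vertex of `A` (`depthGE_cycle`). If `w` is the first vertex on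
the path after `a`, and `F` is the graph in which `w` is absorbed into the complete graph, then
`I_E = I_F ∩ ((x_a, y_a) + I_E)` (`bi_eq_inf`), and Mayer-Vietoris together with
induction on the length of the path reduces everything to complete graphs with a pendant path. On
such graphs, the minor of each edge of the path is a nonzerodivisor modulo the preceding ones
(`Tail.bounds`), so only the complete graph remains (`depthGE_clq`). There one uses that the
variables are nonzerodivisors modulo `P`, because `P` is the kernel of the parametrisation
`x_i ↦ s u_i`, `y_i ↦ u_i` (`mem_bi_sameColor`).

**Dimension.** `dim S/I_C ≤ n + 1` because the `n - 1` edges of a path in the cycle give a regular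
sequence, and `dim S/I_C ≥ dim S/P ≥ depth S/P ≥ n + 1`.

**The witness.** Let `F = (∏ x_i)^n`. Repeated use of `x_a g_{ij} = x_i g_{aj} + x_j g_{ia}` gives
`F P ⊆ I_C` (`wit_mul_mem`), while `F` is regular modulo `P`. Hence `P ∩ (I_C + (F^m)) = I_C`, and
Mayer-Vietoris for `P` and `I_C + (F^m)` gives `depth S/(I_C + (F^m)) ≥ n` (`depthGE_sup`). In the
other direction, a prime containing `I_C + (F^m)` contains either some `x_a, y_a` together with the
ideal of a path on `n - 1` vertices, or `P + (F^m)`; in both cases the dimension is at most `n`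
(`dim_sup_le`). So depth and dimension of `S/(I_C + (F^m))` are both `n`.
-/

open MvPolynomial CategoryTheory Opposite

noncomputable section

namespace BEIPaper

/-- The `x_i` variable of the polynomial ring `K[x_1,…,x_n,y_1,…,y_n]`,
which we realize as `MvPolynomial (σ ⊕ σ) K`, where `Sum.inl i ↦ x_i` and
`Sum.inr i ↦ y_i`. -/
def xv (K : Type) [Field K] {σ : Type} (i : σ) : MvPolynomial (σ ⊕ σ) K :=
  X (Sum.inl i)

/-- The `y_i` variable. -/
def yv (K : Type) [Field K] {σ : Type} (i : σ) : MvPolynomial (σ ⊕ σ) K :=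
  X (Sum.inr i)

/-- The binomial edge ideal of a graph `G` on the vertex set `[n]`:
generated by the binomials `x_i y_j - x_j y_i` for edges `{i, j}` with `i < j`. -/
def bei (K : Type) [Field K] {n : ℕ} (G : SimpleGraph (Fin n)) :
    Ideal (MvPolynomial (Fin n ⊕ Fin n) K) :=
  Ideal.span {f | ∃ i j : Fin n, i < j ∧ G.Adj i j ∧
    f = xv K i * yv K j - xv K j * yv K i}

/-- The prime ideal `P_T(G)`: generated by `{x_i, y_i : i ∈ T}` together with the
binomial edge ideals of the complete graphs on the vertex sets of the connected
components of the induced subgraph of `G` on `[n] ∖ T` (equivalently, all binomials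
`x_i y_j - x_j y_i` where `i < j` lie outside `T` in the same connected component). -/
def PT (K : Type) [Field K] {n : ℕ} (G : SimpleGraph (Fin n)) (T : Set (Fin n)) :
    Ideal (MvPolynomial (Fin n ⊕ Fin n) K) :=
  Ideal.span ((xv K '' T) ∪ (yv K '' T) ∪
    {f | ∃ i j : Fin n, ∃ (hi : i ∈ Tᶜ) (hj : j ∈ Tᶜ), i < j ∧
      (G.induce Tᶜ).Reachable ⟨i, hi⟩ ⟨j, hj⟩ ∧
      f = xv K i * yv K j - xv K j * yv K i})

/-- `c(T)`: the number of connected components of the induced subgraph of `G`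
on `[n] ∖ T`. -/
def ncomp {n : ℕ} (G : SimpleGraph (Fin n)) (T : Set (Fin n)) : ℕ :=
  Nat.card (G.induce Tᶜ).ConnectedComponent

/-- The graded (irrelevant) maximal ideal of a polynomial ring, generated by
all the variables. -/
def mIdeal (K : Type) [Field K] (σ : Type) : Ideal (MvPolynomial σ K) :=
  Ideal.span (Set.range X)

/-- The depth of a module `M` with respect to an ideal `I`: the supremum of lengths
of `M`-regular sequences consisting of elements of `I`. -/
def depth {R : Type} [CommRing R] (I : Ideal R) (M : Type) [AddCommGroup M]
    [Module R M] : ℕ∞ :=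
  sSup {k : ℕ∞ | ∃ rs : List R, (rs.length : ℕ∞) = k ∧ (∀ r ∈ rs, r ∈ I) ∧
    RingTheory.Sequence.IsRegular M rs}

/-- The (Krull) dimension of a module: the Krull dimension of `R` modulo the
annihilator of `M`. -/
def mdim (R : Type) [CommRing R] (M : Type) [AddCommGroup M] [Module R M] :
    WithBot ℕ∞ :=
  ringKrullDim (R ⧸ Module.annihilator R M)

/-- `M` is a Cohen-Macaulay `R`-module of dimension `d` (depth and dimension both
being taken with respect to the given (maximal graded) ideal `I`). -/
def IsCMmodOfDim {R : Type} [CommRing R] (I : Ideal R) (M : Type) [AddCommGroup M]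
    [Module R M] (d : ℕ) : Prop :=
  (depth I M : WithBot ℕ∞) = mdim R M ∧ mdim R M = (d : ℕ∞)

/-- The quotient `S/J` of a polynomial ring `S` by an ideal `J` is a Cohen-Macaulay
ring: its depth with respect to the graded maximal ideal equals its Krull dimension. -/
def IsCMQuot (K : Type) [Field K] {σ : Type} (J : Ideal (MvPolynomial σ K)) : Prop :=
  (depth (mIdeal K σ) (MvPolynomial σ K ⧸ J) : WithBot ℕ∞) =
    ringKrullDim (MvPolynomial σ K ⧸ J)

/-- `S/I` is approximately Cohen-Macaulay: there is a homogeneous element `x` of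
positive degree in the irrelevant ideal of `R = S/I` (i.e. the image of a homogeneous
polynomial `f` of positive degree) such that `R/x^m R = S/(I + (f^m))` is a
Cohen-Macaulay ring of dimension `dim R - 1` for all `m ≥ 1`. -/
def IsACM (K : Type) [Field K] {σ : Type} (I : Ideal (MvPolynomial σ K)) : Prop :=
  ∃ (d : ℕ) (f : MvPolynomial σ K), 0 < d ∧ f.IsHomogeneous d ∧
    ∀ m : ℕ, 1 ≤ m →
      IsCMQuot K (I ⊔ Ideal.span {f ^ m}) ∧
      ringKrullDim (MvPolynomial σ K ⧸ (I ⊔ Ideal.span {f ^ m})) + 1 =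
        ringKrullDim (MvPolynomial σ K ⧸ I)

/-- The Hilbert series of `S/I` (for a homogeneous ideal `I`), as a power series
over `ℤ`: the `m`-th coefficient is the `K`-dimension of the degree-`m` graded
component of `S/I`, i.e. of the image of the space of degree-`m` homogeneous
polynomials in `S/I`. -/
def hseries (K : Type) [Field K] {σ : Type} (I : Ideal (MvPolynomial σ K)) :
    PowerSeries ℤ :=
  PowerSeries.mk fun m =>
    (Module.finrank K (Submodule.map (Ideal.Quotient.mkₐ K I).toLinearMap
      (homogeneousSubmodule σ K m)) : ℤ)

/-- The formal power series variable `t`. -/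
def t : PowerSeries ℤ := PowerSeries.X

/-- The equidimensional part `U_S(I)` of (a minimal primary decomposition of) `I`:
the intersection of the primary components `I(p)` over the associated primes `p`
with `dim S/p = dim S/I`.  Any such `p` is a minimal prime of `I`, so its primary
component is independent of the decomposition and equals the saturation
`{x | ∃ s ∉ p, s * x ∈ I}`. -/
def USideal {R : Type} [CommRing R] (I : Ideal R) : Ideal R :=
  sInf {J | ∃ p ∈ associatedPrimes R (R ⧸ I),
    ringKrullDim (R ⧸ p) = ringKrullDim (R ⧸ I) ∧
    J = Ideal.span {x | ∃ s ∉ p, s * x ∈ I}}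

/-- `Ext_S^j(S/I, S)`, as an object of `ModuleCat S`.  The `i`-th module of
deficiency of `S/I` is `ω^i(S/I) = Ext_S^{2n-i}(S/I, S)`, i.e. `extSI K I (2*n - i)`. -/
def extSI (K : Type) [Field K] {σ : Type} (I : Ideal (MvPolynomial σ K)) (j : ℕ) :
    ModuleCat (MvPolynomial σ K) :=
  ((Ext (MvPolynomial σ K) (ModuleCat (MvPolynomial σ K)) j).obj
      (op (ModuleCat.of (MvPolynomial σ K) (MvPolynomial σ K ⧸ I)))).obj
    (ModuleCat.of (MvPolynomial σ K) (MvPolynomial σ K))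

/-- The line (path) graph on `[n]` (with `[n]` realized as `Fin n`), with edges
`{i, i+1}` for `1 ≤ i ≤ n-1`. -/
def lineG (n : ℕ) : SimpleGraph (Fin n) :=
  SimpleGraph.fromRel (fun a b => (b : ℕ) = (a : ℕ) + 1)

/-- The cycle of length `n` on `[n]` (with `[n]` realized as `Fin n`), with edges
`{i, i+1}` for `1 ≤ i ≤ n-1` together with `{1, n}`. -/
def cycleG (n : ℕ) : SimpleGraph (Fin n) :=
  SimpleGraph.fromRel (fun a b =>
    (b : ℕ) = (a : ℕ) + 1 ∨ ((a : ℕ) = 0 ∧ (b : ℕ) = n - 1))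

/-- The binomial `g = x_1 y_n - x_n y_1`. -/
def gElt (K : Type) [Field K] {n : ℕ} (hn : 0 < n) : MvPolynomial (Fin n ⊕ Fin n) K :=
  xv K ⟨0, hn⟩ * yv K ⟨n - 1, by omega⟩ - xv K ⟨n - 1, by omega⟩ * yv K ⟨0, hn⟩

/-- The `i`-th generator `x_2 x_3 ⋯ x_i y_{i+1} ⋯ y_{n-1}` (for `i = 1, …, n-1`)
of the monomial ideal `M`; the product ranges over the labels `p = 2, …, n-1`
(`0`-indexed: `q = p - 1` with `1 ≤ q ≤ n-2`), taking `x_p` when `p ≤ i` and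
`y_p` when `p > i`. -/
def mgen (K : Type) [Field K] (n : ℕ) (i : ℕ) : MvPolynomial (Fin n ⊕ Fin n) K :=
  ∏ q ∈ Finset.univ.filter (fun q : Fin n => 0 < (q : ℕ) ∧ (q : ℕ) < n - 1),
    (if (q : ℕ) + 1 ≤ i then xv K q else yv K q)

/-- The monomial ideal
`M = (x_2 x_3 ⋯ x_{n-1}, x_2 x_3 ⋯ x_{n-2} y_{n-1}, …, x_2 y_3 ⋯ y_{n-1}, y_2 y_3 ⋯ y_{n-1})`. -/
def monoM (K : Type) [Field K] (n : ℕ) : Ideal (MvPolynomial (Fin n ⊕ Fin n) K) :=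
  Ideal.span {f | ∃ i : ℕ, 1 ≤ i ∧ i ≤ n - 1 ∧ f = mgen K n i}

/-- The degree of a vertex, as the cardinality of its neighbor set. -/
def deg {n : ℕ} (G : SimpleGraph (Fin n)) (v : Fin n) : ℕ :=
  Nat.card (G.neighborSet v)

/-- A tree is 3-star like if no vertex has degree `≥ 4`, and either there is at most
one vertex of degree `3`, or there are exactly two vertices of degree `3` and they
are joined by an edge. -/
def ThreeStarLike {n : ℕ} (G : SimpleGraph (Fin n)) : Prop :=
  (∀ v, deg G v ≤ 3) ∧
    ({v | deg G v = 3}.Subsingleton ∨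
      ∃ a b : Fin n, a ≠ b ∧ G.Adj a b ∧ {v | deg G v = 3} = {a, b})

/-- The graph `G′` on `[n+1]` obtained from a graph `G` on `[n]` by attaching the
new edge `{v, n+1}` at the vertex `v` of `G`. -/
def extendG {n : ℕ} (G : SimpleGraph (Fin n)) (v : Fin n) : SimpleGraph (Fin (n + 1)) :=
  SimpleGraph.fromRel (fun a b =>
    (∃ (ha : a ≠ Fin.last n) (hb : b ≠ Fin.last n),
      G.Adj (a.castPred ha) (b.castPred hb)) ∨
    (a = Fin.castSucc v ∧ b = Fin.last n))

/-- The inclusion `S = K[x_1,…,x_n,y_1,…,y_n] → S′ = K[x_1,…,x_{n+1},y_1,…,y_{n+1}]`. -/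
def liftS (K : Type) [Field K] (n : ℕ) :
    MvPolynomial (Fin n ⊕ Fin n) K →ₐ[K] MvPolynomial (Fin (n + 1) ⊕ Fin (n + 1)) K :=
  rename (Sum.map Fin.castSucc Fin.castSucc)

/-! ### Depth via vanishing of `Ext` -/

section
open Abelian

/-- The module `M` has `I`-depth at least `k`, in the sense that `Ext^i(R/I, M)` vanishes for `i < k`.
In this form lower bounds for the depth pass along short exact sequences. -/
def DepthGE {R : Type} [CommRing R] (I : Ideal R) (k : ℕ) (M : Type) [AddCommGroup M]
    [Module R M] : Prop :=
  ∀ i < k, ∀ e : Abelian.Ext (ModuleCat.of R (R ⧸ I)) (ModuleCat.of R M) i, e = 0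

section depth
variable {R : Type} [CommRing R] {I : Ideal R} {A B C : Type} [AddCommGroup A] [Module R A]
  [AddCommGroup B] [Module R B] [AddCommGroup C] [Module R C]

lemma DepthGE.mono {k l : ℕ} (h : DepthGE I k A) (hl : l ≤ k) : DepthGE I l A :=
  fun i hi => h i (hi.trans_le hl)

lemma DepthGE.retract {k : ℕ} (f : A →ₗ[R] B) (g : B →ₗ[R] A) (hgf : g ∘ₗ f = LinearMap.id)
    (h : DepthGE I k B) : DepthGE I k A := by
  intro i hi e
  have h1 : e.comp (Ext.mk₀ (ModuleCat.ofHom f)) (add_zero i) = 0 := h i hi _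
  have h2 : (e.comp (Ext.mk₀ (ModuleCat.ofHom f)) (add_zero i)).comp
      (Ext.mk₀ (ModuleCat.ofHom g)) (add_zero i) = e := by
    rw [Ext.comp_assoc_of_third_deg_zero, Ext.mk₀_comp_mk₀, ← ModuleCat.ofHom_comp, hgf,
      ModuleCat.ofHom_id, Ext.comp_mk₀_id]
  rw [← h2, h1, Ext.zero_comp]

lemma DepthGE.congr {k : ℕ} (e : A ≃ₗ[R] B) (h : DepthGE I k B) : DepthGE I k A :=
  h.retract e.toLinearMap e.symm.toLinearMap (by ext; simp)

lemma shortExact_of {f : A →ₗ[R] B} {g : B →ₗ[R] C} (hf : Function.Injective f)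
    (hg : Function.Surjective g) (hfg : Function.Exact f g) :
    (ShortComplex.moduleCatMk f g hfg.linearMap_comp_eq_zero).ShortExact where
  exact := ModuleCat.shortComplex_exact _ hfg
  mono_f := (ModuleCat.mono_iff_injective _).2 hf
  epi_g := (ModuleCat.epi_iff_surjective _).2 hg

/-- The behaviour of depth in a short exact sequence `0 → A → B → C → 0`: the bound for the middle
term. The lemmas `DepthGE.left` and `DepthGE.right` give the bounds for the outer terms. -/
lemma DepthGE.mid {k : ℕ} {f : A →ₗ[R] B} {g : B →ₗ[R] C} (hf : Function.Injective f)
    (hg : Function.Surjective g) (hfg : Function.Exact f g)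
    (hA : DepthGE I k A) (hC : DepthGE I k C) : DepthGE I k B := by
  intro i hi e
  obtain ⟨x, hx⟩ := Ext.covariant_sequence_exact₂ _ (shortExact_of hf hg hfg) e (hC i hi _)
  have hx0 : x = 0 := hA i hi x
  rw [← hx, hx0, Ext.zero_comp]
  rfl

lemma DepthGE.left {k : ℕ} {f : A →ₗ[R] B} {g : B →ₗ[R] C} (hf : Function.Injective f)
    (hg : Function.Surjective g) (hfg : Function.Exact f g)
    (hB : DepthGE I (k + 1) B) (hC : DepthGE I k C) : DepthGE I (k + 1) A := by
  intro i hi e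
  cases i with
  | zero =>
    have := (shortExact_of hf hg hfg).mono_f
    refine Ext.postcomp_mk₀_injective_of_mono _ (ShortComplex.moduleCatMk f g
      hfg.linearMap_comp_eq_zero).f ?_
    exact (hB 0 hi _).trans (hB 0 hi _).symm
  | succ i =>
    obtain ⟨x, hx⟩ := Ext.covariant_sequence_exact₁ _ (shortExact_of hf hg hfg) e (hB _ hi _) rfl
    have hx0 : x = 0 := hC i (by omega) x
    rw [← hx, hx0, Ext.zero_comp]
    rfl

lemma DepthGE.right {k : ℕ} {f : A →ₗ[R] B} {g : B →ₗ[R] C} (hf : Function.Injective f)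
    (hg : Function.Surjective g) (hfg : Function.Exact f g)
    (hA : DepthGE I (k + 1) A) (hB : DepthGE I k B) : DepthGE I k C := by
  intro i hi e
  obtain ⟨x, hx⟩ := Ext.covariant_sequence_exact₃ _ (shortExact_of hf hg hfg) e rfl
    (hA (i + 1) (by omega) _)
  have hx0 : x = 0 := hB i (by omega) x
  rw [← hx, hx0, Ext.zero_comp]
  rfl

lemma DepthGE.prod {k : ℕ} (hA : DepthGE I k A) (hB : DepthGE I k B) : DepthGE I k (A × B) :=
  DepthGE.mid LinearMap.inl_injective LinearMap.snd_surjective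
    (LinearMap.exact_iff.2 (by rw [LinearMap.range_inl])) hA hB

lemma DepthGE.of_prod_right {k : ℕ} (h : DepthGE I k (A × B)) : DepthGE I k B :=
  h.retract (LinearMap.inr R A B) (LinearMap.snd R A B) (by ext; simp)

/-- Dividing by a regular element lowers the depth by at most one. -/
lemma DepthGE.quot {k : ℕ} {r : R} {g : A →ₗ[R] B} (hr : IsSMulRegular A r)
    (hg : Function.Surjective g) (hfg : Function.Exact (LinearMap.lsmul R A r) g)
    (h : DepthGE I (k + 1) A) : DepthGE I k B :=
  DepthGE.right (f := LinearMap.lsmul R A r) hr hg hfg h (h.mono (by omega))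

/-- Dividing by a regular element `r ∈ I` lowers the depth by at least one: as `r` annihilates
`Ext^i(R/I, A)`, the connecting map from `Ext^{i-1}(R/I, A/rA)` is surjective. -/
lemma DepthGE.of_quot {k : ℕ} {r : R} (hrI : r ∈ I) {g : A →ₗ[R] B} (hr : IsSMulRegular A r)
    (hg : Function.Surjective g) (hfg : Function.Exact (LinearMap.lsmul R A r) g)
    (h : DepthGE I k B) : DepthGE I (k + 1) A := by
  intro i hi e
  have hse := shortExact_of (f := LinearMap.lsmul R A r) hr hg hfg
  have h0 : r • 𝟙 (ModuleCat.of R (R ⧸ I)) = 0 := by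
    refine ModuleCat.hom_ext (LinearMap.ext fun x => ?_)
    obtain ⟨x, rfl⟩ := Ideal.Quotient.mk_surjective x
    change r • (Ideal.Quotient.mk I x) = 0
    rw [← Ideal.Quotient.mk_eq_mk, ← Submodule.Quotient.mk_smul, Submodule.Quotient.mk_eq_zero]
    exact I.mul_mem_right _ hrI
  have hz : e.comp (Ext.mk₀ (ModuleCat.ofHom (LinearMap.lsmul R A r))) (add_zero i) = 0 := by
    have h1 : ModuleCat.ofHom (LinearMap.lsmul R A r) = r • 𝟙 (ModuleCat.of R A) := rfl
    rw [h1, ← Ext.smul_eq_comp_mk₀]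
    have : r • e = (Ext.mk₀ (r • 𝟙 (ModuleCat.of R (R ⧸ I)))).comp e (zero_add i) := by
      simp [Ext.mk₀_smul]
    rw [this, h0, Ext.mk₀_zero, Ext.zero_comp]
  cases i with
  | zero =>
    have := hse.mono_f
    refine Ext.postcomp_mk₀_injective_of_mono _ (ShortComplex.moduleCatMk _ g
      hfg.linearMap_comp_eq_zero).f ?_
    exact hz.trans (map_zero _).symm
  | succ i =>
    obtain ⟨x, hx⟩ := Ext.covariant_sequence_exact₁ _ hse e hz rfl
    have hx0 : x = 0 := h i (by omega) x
    rw [← hx, hx0, Ext.zero_comp]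
    rfl

lemma depthGE_zero : DepthGE I 0 A := fun i hi => absurd hi (Nat.not_lt_zero i)

/-- Rees: if `Hom(R/I, M) = 0` then `I` contains an `M`-regular element, and one can pass to the
quotient by it. -/
lemma DepthGE.exists_weaklyRegular [IsNoetherianRing R] (k : ℕ) :
    ∀ (M : Type) [AddCommGroup M] [Module R M] [Module.Finite R M], DepthGE I k M →
      ∃ rs : List R, rs.length = k ∧ (∀ r ∈ rs, r ∈ I) ∧
        RingTheory.Sequence.IsWeaklyRegular M rs := by
  induction k with
  | zero => exact fun M _ _ _ _ => ⟨[], rfl, by simp, by simp⟩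
  | succ k ih =>
    intro M _ _ _ h
    have h0 : Subsingleton ((R ⧸ I) →ₗ[R] M) := by
      refine ⟨fun f g => ?_⟩
      have h1 := (h 0 (by omega) (Ext.mk₀ (ModuleCat.ofHom f))).trans
        (h 0 (by omega) (Ext.mk₀ (ModuleCat.ofHom g))).symm
      exact congrArg ModuleCat.Hom.hom ((Ext.mk₀_bijective _ _).1 h1)
    obtain ⟨r, hr, hreg⟩ := IsSMulRegular.subsingleton_linearMap_iff.1 h0
    rw [Ideal.annihilator_quotient] at hr
    obtain ⟨rs, h1, h2, h3⟩ := ih (QuotSMulTop r M)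
      (DepthGE.quot hreg (Submodule.mkQ_surjective _) (LinearMap.exact_lsmul_mkQ_smul_top M r) h)
    exact ⟨r :: rs, by simp [h1], by simpa using ⟨hr, h2⟩, .cons hreg h3⟩

end depth

end

/-! ### Depth and dimension of quotient rings -/

section quotients
variable {R : Type} [CommRing R] {m : Ideal R}

/-- `r` is a nonzerodivisor modulo the ideal `I`. -/
def NZD (I : Ideal R) (r : R) : Prop := ∀ h, r * h ∈ I → h ∈ I

lemma smul_mk (I : Ideal R) (r x : R) :
    r • (Ideal.Quotient.mk I x) = Ideal.Quotient.mk I (r * x) := rfl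

lemma NZD.isSMulRegular {I : Ideal R} {r : R} (h : NZD I r) : IsSMulRegular (R ⧸ I) r := by
  rw [isSMulRegular_iff_right_eq_zero_of_smul]
  intro x hx
  obtain ⟨x, rfl⟩ := Ideal.Quotient.mk_surjective x
  rw [smul_mk, Ideal.Quotient.eq_zero_iff_mem] at hx
  exact Ideal.Quotient.eq_zero_iff_mem.2 (h x hx)

lemma nzd_of_isSMulRegular {I : Ideal R} {r : R} (h : IsSMulRegular (R ⧸ I) r) : NZD I r := by
  intro x hx
  rw [isSMulRegular_iff_right_eq_zero_of_smul] at h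
  refine Ideal.Quotient.eq_zero_iff_mem.1 (h (Ideal.Quotient.mk I x) ?_)
  rw [smul_mk, Ideal.Quotient.eq_zero_iff_mem]
  exact hx

lemma factor_surj {I J : Ideal R} (hIJ : I ≤ J) :
    Function.Surjective (Ideal.Quotient.factorₐ R hIJ).toLinearMap :=
  Ideal.Quotient.factor_surjective hIJ

lemma mem_sup_span_singleton {I : Ideal R} {r x : R} :
    x ∈ I ⊔ Ideal.span {r} ↔ ∃ y, x - r * y ∈ I := by
  rw [sup_comm, Ideal.mem_span_singleton_sup]
  constructor
  · rintro ⟨a, b, hb, rfl⟩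
    exact ⟨a, by convert hb using 1; ring⟩
  · rintro ⟨y, hy⟩
    exact ⟨y, _, hy, by ring⟩

lemma exact_lsmul_factor {I J : Ideal R} {r : R} (hJ : J = I ⊔ Ideal.span {r}) (hIJ : I ≤ J) :
    Function.Exact (LinearMap.lsmul R (R ⧸ I) r) (Ideal.Quotient.factorₐ R hIJ).toLinearMap := by
  intro x
  obtain ⟨x, rfl⟩ := Ideal.Quotient.mk_surjective x
  have : (Ideal.Quotient.factorₐ R hIJ).toLinearMap (Ideal.Quotient.mk I x) =
    Ideal.Quotient.mk J x := rfl
  rw [this, Ideal.Quotient.eq_zero_iff_mem, hJ, mem_sup_span_singleton]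
  constructor
  · rintro ⟨y, hy⟩
    exact ⟨Ideal.Quotient.mk I y, ((Ideal.Quotient.eq).2 hy).symm⟩
  · rintro ⟨y, hy⟩
    obtain ⟨y, rfl⟩ := Ideal.Quotient.mk_surjective y
    exact ⟨y, (Ideal.Quotient.eq).1 hy.symm⟩

lemma NZD.depth_quot {I : Ideal R} {r : R} {k : ℕ} (hr : NZD I r) (h : DepthGE m (k + 1) (R ⧸ I)) :
    DepthGE m k (R ⧸ (I ⊔ Ideal.span {r})) :=
  DepthGE.quot hr.isSMulRegular (factor_surj le_sup_left) (exact_lsmul_factor rfl _) h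

lemma NZD.depth_of_quot {I : Ideal R} {r : R} {k : ℕ} (hrm : r ∈ m) (hr : NZD I r)
    (h : DepthGE m k (R ⧸ (I ⊔ Ideal.span {r}))) : DepthGE m (k + 1) (R ⧸ I) :=
  DepthGE.of_quot hrm hr.isSMulRegular (factor_surj le_sup_left) (exact_lsmul_factor rfl _) h

/-- The exact sequence `0 → R/(I : r) → R/I → R/(I + (r)) → 0`. -/
lemma DepthGE.colon {I I₂ : Ideal R} {r : R} {k : ℕ} (hc : ∀ h, r * h ∈ I ↔ h ∈ I₂)
    (h₁ : DepthGE m k (R ⧸ I₂)) (h₂ : DepthGE m k (R ⧸ (I ⊔ Ideal.span {r}))) :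
    DepthGE m k (R ⧸ I) := by
  have hle : I₂ ≤ LinearMap.ker (I.mkQ ∘ₗ LinearMap.lsmul R R r) := fun x hx =>
    Ideal.Quotient.eq_zero_iff_mem.2 ((hc x).2 hx)
  let f : (R ⧸ I₂) →ₗ[R] (R ⧸ I) := Submodule.liftQ I₂ (I.mkQ ∘ₗ LinearMap.lsmul R R r) hle
  have hf : ∀ x, f (Ideal.Quotient.mk I₂ x) = Ideal.Quotient.mk I (r * x) := fun x => rfl
  refine DepthGE.mid (f := f) ?_ (factor_surj (le_sup_left : I ≤ I ⊔ Ideal.span {r})) ?_ h₁ h₂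
  · rw [injective_iff_map_eq_zero]
    intro x hx
    obtain ⟨x, rfl⟩ := Ideal.Quotient.mk_surjective x
    rw [hf, Ideal.Quotient.eq_zero_iff_mem] at hx
    exact Ideal.Quotient.eq_zero_iff_mem.2 ((hc x).1 hx)
  · intro x
    rw [exact_lsmul_factor rfl]
    constructor
    · rintro ⟨y, hy⟩
      obtain ⟨y, rfl⟩ := Ideal.Quotient.mk_surjective y
      exact ⟨Ideal.Quotient.mk I₂ y, hy⟩
    · rintro ⟨y, hy⟩
      obtain ⟨y, rfl⟩ := Ideal.Quotient.mk_surjective y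
      exact ⟨Ideal.Quotient.mk I y, hy⟩

/-- The Mayer-Vietoris sequence `0 → R/(I₁ ∩ I₂) → R/I₁ × R/I₂ → R/(I₁ + I₂) → 0`. -/
lemma mayerVietoris (I₁ I₂ : Ideal R) :
    ∃ (f : (R ⧸ (I₁ ⊓ I₂)) →ₗ[R] (R ⧸ I₁) × (R ⧸ I₂))
      (g : (R ⧸ I₁) × (R ⧸ I₂) →ₗ[R] (R ⧸ (I₁ ⊔ I₂))),
      Function.Injective f ∧ Function.Surjective g ∧ Function.Exact f g := by
  let f := (Ideal.Quotient.factorₐ R (inf_le_left : I₁ ⊓ I₂ ≤ I₁)).toLinearMap.prod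
    (Ideal.Quotient.factorₐ R (inf_le_right : I₁ ⊓ I₂ ≤ I₂)).toLinearMap
  let g := (Ideal.Quotient.factorₐ R (le_sup_left : I₁ ≤ I₁ ⊔ I₂)).toLinearMap.coprod
    (-(Ideal.Quotient.factorₐ R (le_sup_right : I₂ ≤ I₁ ⊔ I₂)).toLinearMap)
  have hf : ∀ x, f (Ideal.Quotient.mk _ x) = (Ideal.Quotient.mk _ x, Ideal.Quotient.mk _ x) :=
    fun x => rfl
  have hg : ∀ x y, g (Ideal.Quotient.mk _ x, Ideal.Quotient.mk _ y) =
      Ideal.Quotient.mk _ (x - y) := fun x y => by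
    rw [map_sub, sub_eq_add_neg]; rfl
  refine ⟨f, g, ?_, ?_, ?_⟩
  · rw [injective_iff_map_eq_zero]
    intro x hx
    obtain ⟨x, rfl⟩ := Ideal.Quotient.mk_surjective x
    rw [hf, Prod.mk_eq_zero, Ideal.Quotient.eq_zero_iff_mem, Ideal.Quotient.eq_zero_iff_mem] at hx
    exact Ideal.Quotient.eq_zero_iff_mem.2 hx
  · intro x
    obtain ⟨x, rfl⟩ := Ideal.Quotient.mk_surjective x
    exact ⟨(Ideal.Quotient.mk _ x, Ideal.Quotient.mk _ 0), by rw [hg, sub_zero]⟩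
  · rintro ⟨x, y⟩
    obtain ⟨x, rfl⟩ := Ideal.Quotient.mk_surjective x
    obtain ⟨y, rfl⟩ := Ideal.Quotient.mk_surjective y
    rw [hg, Ideal.Quotient.eq_zero_iff_mem, Submodule.mem_sup]
    constructor
    · rintro ⟨a, ha, b, hb, hab⟩
      refine ⟨Ideal.Quotient.mk _ (x - a), ?_⟩
      rw [hf, Prod.mk.injEq, Ideal.Quotient.eq, Ideal.Quotient.eq]
      exact ⟨by simpa using ha, by convert hb using 1; linear_combination -hab⟩
    · rintro ⟨z, hz⟩
      obtain ⟨z, rfl⟩ := Ideal.Quotient.mk_surjective z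
      rw [hf, Prod.mk.injEq, Ideal.Quotient.eq, Ideal.Quotient.eq] at hz
      exact ⟨x - z, by simpa using I₁.neg_mem hz.1, z - y, hz.2, by ring⟩

lemma DepthGE.inf {I₁ I₂ : Ideal R} {k : ℕ} (h₁ : DepthGE m (k + 1) (R ⧸ I₁))
    (h₂ : DepthGE m (k + 1) (R ⧸ I₂)) (h : DepthGE m k (R ⧸ (I₁ ⊔ I₂))) :
    DepthGE m (k + 1) (R ⧸ (I₁ ⊓ I₂)) := by
  obtain ⟨f, g, hf, hg, hfg⟩ := mayerVietoris I₁ I₂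
  exact DepthGE.left hf hg hfg (h₁.prod h₂) h

lemma DepthGE.of_inf {I₁ I₂ : Ideal R} {k : ℕ} (h₁ : DepthGE m k (R ⧸ (I₁ ⊓ I₂)))
    (h₂ : DepthGE m k (R ⧸ (I₁ ⊔ I₂))) : DepthGE m k (R ⧸ I₂) := by
  obtain ⟨f, g, hf, hg, hfg⟩ := mayerVietoris I₁ I₂
  exact (DepthGE.mid hf hg hfg h₁ h₂).of_prod_right

lemma NZD.dim_quot {I : Ideal R} {r : R} (hr : NZD I r) :
    ringKrullDim (R ⧸ (I ⊔ Ideal.span {r})) + 1 ≤ ringKrullDim (R ⧸ I) := by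
  refine ringKrullDim_succ_le_of_surjective
    (Ideal.Quotient.factor (le_sup_left : I ≤ I ⊔ Ideal.span {r}))
    (Ideal.Quotient.factor_surjective _) (r := Ideal.Quotient.mk I r) ?_ ?_
  · rw [mem_nonZeroDivisors_iff_right]
    intro x hx
    obtain ⟨x, rfl⟩ := Ideal.Quotient.mk_surjective x
    rw [← map_mul, Ideal.Quotient.eq_zero_iff_mem, mul_comm] at hx
    exact Ideal.Quotient.eq_zero_iff_mem.2 (hr x hx)
  · rw [Ideal.Quotient.factor_mk, Ideal.Quotient.eq_zero_iff_mem]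
    exact Ideal.mem_sup_right (Ideal.mem_span_singleton_self r)

/-- Regular sequences are no longer than the dimension, as each step lowers the dimension. -/
lemma length_le_dim (rs : List R) : ∀ I : Ideal R, RingTheory.Sequence.IsRegular (R ⧸ I) rs →
    (rs.length : WithBot ℕ∞) ≤ ringKrullDim (R ⧸ I) := by
  induction rs with
  | nil =>
    intro I h
    have := h.nontrivial
    simpa using ringKrullDim_nonneg_of_nontrivial
  | cons r rs ih =>
    intro I h
    rw [RingTheory.Sequence.isRegular_cons_iff] at h
    have hr := nzd_of_isSMulRegular h.1
    have hex := exact_lsmul_factor (I := I) (r := r) rfl le_sup_left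
    have e1 : QuotSMulTop r (R ⧸ I) ≃ₗ[R] (R ⧸ (I ⊔ Ideal.span {r})) := by
      refine LinearEquiv.trans (Submodule.quotEquivOfEq _ _ ?_)
        ((Ideal.Quotient.factorₐ R (le_sup_left : I ≤ I ⊔ Ideal.span {r})).toLinearMap.quotKerEquivOfSurjective
          (factor_surj _))
      rw [LinearMap.exact_iff.1 hex]
      ext x
      simp [Submodule.mem_smul_pointwise_iff_exists]
    refine le_trans ?_ hr.dim_quot
    have := ih _ ((LinearEquiv.isRegular_congr e1 rs).1 h.2)
    push_cast [List.length_cons]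
    gcongr

end quotients

/-- For `I ≤ m ≠ R` a weakly regular sequence on `R/I` in `m` is regular, because `m` kills the
nonzero quotient `R/m`. -/
lemma DepthGE.exists_regular {R : Type} [CommRing R] [IsNoetherianRing R] {m I : Ideal R}
    (hm : m ≠ ⊤) (hI : I ≤ m) {k : ℕ} (h : DepthGE m k (R ⧸ I)) :
    ∃ rs : List R, rs.length = k ∧ (∀ r ∈ rs, r ∈ m) ∧
      RingTheory.Sequence.IsRegular (R ⧸ I) rs := by
  obtain ⟨rs, h1, h2, h3⟩ := h.exists_weaklyRegular k (R ⧸ I)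
  refine ⟨rs, h1, h2, h3, fun htop => hm ?_⟩
  have hle : Ideal.ofList rs ≤ m := Ideal.span_le.2 h2
  rw [Ideal.eq_top_iff_one]
  have h1 : (Ideal.Quotient.mk I 1) ∈ m • (⊤ : Submodule R (R ⧸ I)) :=
    Submodule.smul_mono_left hle (htop ▸ Submodule.mem_top)
  have h2 : m • (⊤ : Submodule R (R ⧸ I)) ≤
      Submodule.comap (Ideal.Quotient.factorₐ R hI).toLinearMap ⊥ := by
    rw [Submodule.smul_le]
    intro r hr x _
    obtain ⟨x, rfl⟩ := Ideal.Quotient.mk_surjective x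
    exact Ideal.Quotient.eq_zero_iff_mem.2 (m.mul_mem_right x hr)
  exact Ideal.Quotient.eq_zero_iff_mem.1 (h2 h1)

/-- A lower bound for the depth, transferred from vanishing of `Ext` to regular sequences. -/
lemma le_depth {R : Type} [CommRing R] [IsNoetherianRing R] {m I : Ideal R} (hm : m ≠ ⊤)
    (hI : I ≤ m) {k : ℕ} (h : DepthGE m k (R ⧸ I)) : (k : ℕ∞) ≤ depth m (R ⧸ I) := by
  obtain ⟨rs, h1, h2, h3⟩ := h.exists_regular hm hI
  exact le_sSup ⟨rs, by rw [h1], h2, h3⟩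

lemma le_dim {R : Type} [CommRing R] [IsNoetherianRing R] {m I : Ideal R} (hm : m ≠ ⊤)
    (hI : I ≤ m) {k : ℕ} (h : DepthGE m k (R ⧸ I)) : (k : WithBot ℕ∞) ≤ ringKrullDim (R ⧸ I) := by
  obtain ⟨rs, h1, -, h3⟩ := h.exists_regular hm hI
  exact h1 ▸ length_le_dim rs I h3

lemma depth_le_dim {R : Type} [CommRing R] {m I : Ideal R} {d : ℕ}
    (hd : ringKrullDim (R ⧸ I) ≤ d) : depth m (R ⧸ I) ≤ d := by
  refine sSup_le ?_
  rintro k ⟨rs, rfl, -, hrs⟩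
  have := (length_le_dim rs I hrs).trans hd
  exact_mod_cast this

/-! ### Nonzerodivisors and ideals of minors -/

section onevar
variable {K : Type} [Field K] {τ : Type} [DecidableEq τ]

/-- The polynomial ring regarded as a polynomial ring in the single variable `v`: `X v` becomes
the variable, the other `X j` become constants. The remaining coefficient ring is again all of
`MvPolynomial τ K`. -/
def toPoly (K : Type) [Field K] (v : τ) :
    MvPolynomial τ K →ₐ[K] Polynomial (MvPolynomial τ K) :=
  aeval fun j => if j = v then Polynomial.X else Polynomial.C (X j)

lemma toPoly_X_self (v : τ) : toPoly K v (X v) = Polynomial.X := by simp [toPoly]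

lemma toPoly_X_of_ne {v j : τ} (h : j ≠ v) : toPoly K v (X j) = Polynomial.C (X j) := by
  simp [toPoly, h]

lemma eval_toPoly (v : τ) (h : MvPolynomial τ K) : (toPoly K v h).eval (X v) = h := by
  have : ((Polynomial.aeval (X v : MvPolynomial τ K)).restrictScalars K).comp (toPoly K v) =
      AlgHom.id K _ := by
    ext j
    by_cases hj : j = v <;> simp [toPoly, hj]
  simpa [Polynomial.aeval_def, Polynomial.eval₂_eq_eval_map] using DFunLike.congr_fun this h

/-- The ideal `I` is extended from the polynomial ring in the variables other than `v`. -/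
def FreeOf (v : τ) (I : Ideal (MvPolynomial τ K)) : Prop :=
  ∀ h ∈ I, ∀ k, (toPoly K v h).coeff k ∈ I

lemma freeOf_iff {v : τ} {I : Ideal (MvPolynomial τ K)} :
    FreeOf v I ↔ I ≤ (I.map Polynomial.C).comap (toPoly K v) :=
  ⟨fun h _ hx => Ideal.mem_map_C_iff.2 (h _ hx), fun h _ hx => Ideal.mem_map_C_iff.1 (h hx)⟩

lemma freeOf_span {v : τ} {s : Set (MvPolynomial τ K)}
    (hs : ∀ f ∈ s, toPoly K v f = Polynomial.C f) : FreeOf v (Ideal.span s) := by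
  rw [freeOf_iff, Ideal.span_le]
  intro f hf
  rw [SetLike.mem_coe, Ideal.mem_comap, hs f hf]
  exact Ideal.mem_map_of_mem _ (Ideal.subset_span hf)

lemma FreeOf.sup {v : τ} {I J : Ideal (MvPolynomial τ K)} (hI : FreeOf v I) (hJ : FreeOf v J) :
    FreeOf v (I ⊔ J) := by
  rw [freeOf_iff] at *
  refine sup_le (hI.trans (Ideal.comap_mono (Ideal.map_mono le_sup_left)))
    (hJ.trans (Ideal.comap_mono (Ideal.map_mono le_sup_right)))

/-- A polynomial `a v - b` of degree one in `v` is a nonzerodivisor modulo an ideal free of `v`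
as soon as its leading coefficient is. -/
lemma FreeOf.nzd_linear {v : τ} {I : Ideal (MvPolynomial τ K)} (hI : FreeOf v I)
    {a b : MvPolynomial τ K} (ha : toPoly K v a = Polynomial.C a)
    (hb : toPoly K v b = Polynomial.C b) (hn : NZD I a) : NZD I (a * X v - b) := by
  intro h hh
  have hc : ∀ k, a * (toPoly K v h).coeff k - b * (toPoly K v h).coeff (k + 1) ∈ I := by
    intro k
    have := hI _ hh (k + 1)
    rw [map_mul, map_sub, map_mul, ha, hb, toPoly_X_self, sub_mul, mul_assoc,
      Polynomial.coeff_sub, Polynomial.coeff_C_mul, Polynomial.coeff_C_mul,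
      Polynomial.coeff_X_mul] at this
    exact this
  have hk : ∀ j k, (toPoly K v h).natDegree < k + j → (toPoly K v h).coeff k ∈ I := by
    intro j
    induction j with
    | zero =>
      intro k hk
      rw [Polynomial.coeff_eq_zero_of_natDegree_lt (by simpa using hk)]
      exact I.zero_mem
    | succ j ih =>
      intro k hk
      refine hn _ ?_
      have := I.add_mem (hc k) (I.mul_mem_left b (ih (k + 1) (by omega)))
      simpa using this
  rw [← eval_toPoly v h, Polynomial.eval_eq_sum_range]
  exact I.sum_mem fun k _ => I.mul_mem_right _ (hk ((toPoly K v h).natDegree + 1) k (by omega))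

lemma FreeOf.nzd_X {v : τ} {I : Ideal (MvPolynomial τ K)} (hI : FreeOf v I) : NZD I (X v) := by
  have := hI.nzd_linear (a := 1) (b := 0) (by simp) (by simp) (fun h hh => by simpa using hh)
  simpa using this

/-- An element `a` not involving `v` stays a nonzerodivisor modulo `v`: compare constant terms. -/
lemma FreeOf.nzd_sup_X {v : τ} {I : Ideal (MvPolynomial τ K)} (hI : FreeOf v I)
    {a : MvPolynomial τ K} (ha : toPoly K v a = Polynomial.C a) (hn : NZD I a) :
    NZD (I ⊔ Ideal.span {X v}) a := by
  intro h hh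
  rw [mem_sup_span_singleton] at hh ⊢
  obtain ⟨y, hy⟩ := hh
  have h0 := hI _ hy 0
  rw [map_sub, map_mul, map_mul, ha, toPoly_X_self, Polynomial.coeff_sub, Polynomial.coeff_C_mul,
    Polynomial.coeff_X_mul_zero, sub_zero] at h0
  refine ⟨(toPoly K v h).divX.eval (X v), ?_⟩
  have h1 : h = X v * (toPoly K v h).divX.eval (X v) + (toPoly K v h).coeff 0 := by
    have := congrArg (Polynomial.eval (X v)) (Polynomial.X_mul_divX_add (toPoly K v h))
    rw [Polynomial.eval_add, Polynomial.eval_mul, Polynomial.eval_X, Polynomial.eval_C,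
      eval_toPoly] at this
    exact this.symm
  have h2 : h - X v * (toPoly K v h).divX.eval (X v) = (toPoly K v h).coeff 0 := by
    linear_combination h1
  rw [h2]
  exact hn _ h0

end onevar

section nzd
variable {R : Type} [CommRing R]

/-- If `x, y` is a weakly regular sequence on `R/I`, then `x` is regular on `R/(I + (y))`. -/
lemma NZD.swap {I : Ideal R} {x y : R} (hx : NZD I x) (hy : NZD (I ⊔ Ideal.span {x}) y) :
    NZD (I ⊔ Ideal.span {y}) x := by
  intro h hh
  rw [mem_sup_span_singleton] at hh
  obtain ⟨k, hk⟩ := hh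
  have h1 : y * k ∈ I ⊔ Ideal.span {x} :=
    mem_sup_span_singleton.2 ⟨h, by simpa using I.neg_mem hk⟩
  obtain ⟨l, hl⟩ := mem_sup_span_singleton.1 (hy _ h1)
  refine mem_sup_span_singleton.2 ⟨l, hx _ ?_⟩
  have := I.add_mem hk (I.mul_mem_left y hl)
  convert this using 1
  ring

lemma NZD.mul {I : Ideal R} {x y : R} (hx : NZD I x) (hy : NZD I y) : NZD I (x * y) :=
  fun h hh => hy _ (hx _ (by rwa [← mul_assoc]))

lemma NZD.pow {I : Ideal R} {x : R} (hx : NZD I x) (k : ℕ) : NZD I (x ^ k) := by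
  induction k with
  | zero => intro h hh; simpa using hh
  | succ k ih => rw [pow_succ]; exact ih.mul hx

lemma NZD.prod {ι : Type} {I : Ideal R} {x : ι → R} (s : Finset ι) (hx : ∀ i ∈ s, NZD I (x i)) :
    NZD I (∏ i ∈ s, x i) := by
  classical
  induction s using Finset.induction_on with
  | empty => intro h hh; simpa using hh
  | insert a s ha ih =>
    rw [Finset.prod_insert ha]
    exact (hx a (by simp)).mul (ih fun i hi => hx i (by simp [hi]))

end nzd

section binomials
variable {V : Type} (K : Type) [Field K]

/-- The `2`-minor `x_i y_j - x_j y_i`. -/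
def mnr (i j : V) : MvPolynomial (V ⊕ V) K := xv K i * yv K j - xv K j * yv K i

/-- The ideal generated by the minors `x_i y_j - x_j y_i` indexed by a set of pairs. -/
def bi (E : Set (V × V)) : Ideal (MvPolynomial (V ⊕ V) K) :=
  Ideal.span ((fun e : V × V => mnr K e.1 e.2) '' E)

variable {K}

lemma mnr_self (i : V) : mnr K i i = 0 := by simp [mnr]

lemma mnr_swap (i j : V) : mnr K i j = - mnr K j i := by simp [mnr]

lemma mnr_mem_bi {E : Set (V × V)} {i j : V} (h : (i, j) ∈ E) : mnr K i j ∈ bi K E :=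
  Ideal.subset_span ⟨(i, j), h, rfl⟩

lemma bi_le {E : Set (V × V)} {J : Ideal (MvPolynomial (V ⊕ V) K)}
    (h : ∀ i j, (i, j) ∈ E → mnr K i j ∈ J) : bi K E ≤ J := by
  rw [bi, Ideal.span_le]
  rintro _ ⟨⟨i, j⟩, he, rfl⟩
  exact h i j he

lemma bi_mono {E F : Set (V × V)} (h : E ⊆ F) : bi K E ≤ bi K F :=
  bi_le fun _ _ he => mnr_mem_bi (h he)

lemma bi_union (E F : Set (V × V)) : bi K (E ∪ F) = bi K E ⊔ bi K F := by
  rw [bi, Set.image_union, Ideal.span_union]; rfl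

/-- The basic syzygy `x_a g_{ij} = x_i g_{aj} + x_j g_{ia}` of the `2`-minors. -/
lemma xv_mul_mnr (a i j : V) :
    xv K a * mnr K i j = xv K i * mnr K a j + xv K j * mnr K i a := by
  simp only [mnr]; ring

lemma yv_mul_mnr (a i j : V) :
    yv K a * mnr K i j = yv K i * mnr K a j + yv K j * mnr K i a := by
  simp only [mnr]; ring

variable [DecidableEq V]

lemma toPoly_xv {v : V ⊕ V} {i : V} (h : Sum.inl i ≠ v) :
    toPoly K v (xv K i) = Polynomial.C (xv K i) := toPoly_X_of_ne h

lemma toPoly_yv {v : V ⊕ V} {i : V} (h : Sum.inr i ≠ v) :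
    toPoly K v (yv K i) = Polynomial.C (yv K i) := toPoly_X_of_ne h

lemma toPoly_mnr {v : V ⊕ V} {i j : V} (h1 : Sum.inl i ≠ v) (h2 : Sum.inl j ≠ v)
    (h3 : Sum.inr i ≠ v) (h4 : Sum.inr j ≠ v) :
    toPoly K v (mnr K i j) = Polynomial.C (mnr K i j) := by
  simp [mnr, toPoly_xv h1, toPoly_xv h2, toPoly_yv h3, toPoly_yv h4]

/-- The ideal `I` does not involve the variables `x_w` and `y_w`. -/
def Avoids (w : V) (I : Ideal (MvPolynomial (V ⊕ V) K)) : Prop :=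
  FreeOf (Sum.inl w) I ∧ FreeOf (Sum.inr w) I

lemma avoids_bi {E : Set (V × V)} {w : V} (h : ∀ i j, (i, j) ∈ E → i ≠ w ∧ j ≠ w) :
    Avoids w (bi K E) := by
  constructor <;>
  · refine freeOf_span ?_
    rintro _ ⟨⟨i, j⟩, he, rfl⟩
    obtain ⟨h1, h2⟩ := h i j he
    refine toPoly_mnr ?_ ?_ ?_ ?_ <;> simp [h1, h2]

lemma Avoids.nzd_yv {w : V} {I : Ideal (MvPolynomial (V ⊕ V) K)} (h : Avoids w I) :
    NZD (I ⊔ Ideal.span {xv K w}) (yv K w) :=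
  (h.2.sup (freeOf_span (by simpa using toPoly_xv (by simp)))).nzd_X

/-- Attaching a leaf `w` at `v`: the new minor is a nonzerodivisor. -/
lemma FreeOf.nzd_mnr {v w : V} (hvw : w ≠ v) {I : Ideal (MvPolynomial (V ⊕ V) K)}
    (h : FreeOf (Sum.inr w) I) (hv : NZD I (xv K v)) : NZD I (mnr K w v) := by
  have h1 := h.nzd_linear (a := xv K v) (b := xv K w * yv K v) (toPoly_xv (by simp))
    (by simp [toPoly_xv, toPoly_yv, hvw.symm]) hv
  intro x hx
  refine h1 x ?_
  have := I.neg_mem hx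
  rw [mnr, ← neg_mul] at this
  convert this using 2
  simp only [yv]; ring

/-- After attaching a leaf `w` at `v`, the variable `x_w` is a nonzerodivisor. -/
lemma Avoids.nzd_leaf {v w : V} (hvw : w ≠ v) {I : Ideal (MvPolynomial (V ⊕ V) K)}
    (h : Avoids w I) (hv : NZD I (xv K v)) : NZD (I ⊔ Ideal.span {mnr K w v}) (xv K w) := by
  refine NZD.swap h.1.nzd_X ?_
  have h1 : NZD (I ⊔ Ideal.span {xv K w}) (xv K v) :=
    h.1.nzd_sup_X (toPoly_xv (by simp [hvw.symm])) hv
  exact (h.2.sup (freeOf_span (by simpa using toPoly_xv (by simp)))).nzd_mnr hvw h1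
end binomials

/-! ### The complete graph: toric parametrisation -/

section toric
variable {V W : Type} [DecidableEq V] [DecidableEq W] [Fintype V] {K : Type} [Field K]

/-- The pairs of vertices of the same colour. -/
def sameColor (c : V → W) : Set (V × V) := {e | c e.1 = c e.2}

/-- The parametrisation `x_i ↦ s_{c(i)} u_i`, `y_i ↦ u_i` of the variety of the minors with
equally coloured columns, on exponents. -/
def expo (c : V → W) : V ⊕ V → (W ⊕ V →₀ ℕ) :=
  Sum.elim (fun i => Finsupp.single (Sum.inl (c i)) 1 + Finsupp.single (Sum.inr i) 1)
    (fun i => Finsupp.single (Sum.inr i) 1)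

/-- The exponent of the image of the monomial with exponent `u` under the parametrisation. -/
def expoSum (c : V → W) (u : V ⊕ V →₀ ℕ) : W ⊕ V →₀ ℕ := u.sum fun k n => n • expo c k

lemma expoSum_eq (c : V → W) (u : V ⊕ V →₀ ℕ) : expoSum c u = ∑ k, u k • expo c k :=
  Finsupp.sum_fintype _ _ (by simp)

lemma expoSum_inr (c : V → W) (u : V ⊕ V →₀ ℕ) (i : V) :
    expoSum c u (Sum.inr i) = u (Sum.inl i) + u (Sum.inr i) := by
  simp [expoSum_eq, expo, Finsupp.single_apply]

lemma expoSum_inl (c : V → W) (u : V ⊕ V →₀ ℕ) (w : W) :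
    expoSum c u (Sum.inl w) = ∑ i with c i = w, u (Sum.inl i) := by
  simp [expoSum_eq, expo, Finsupp.single_apply, Finset.sum_filter]

/-- Two monomials with the same image are congruent modulo the minors: as long as they differ,
the colour sums allow to exchange some `x_i y_j` for `x_j y_i`, bringing them closer. -/
lemma monomial_sub_mem (c : V → W) (N : ℕ) : ∀ u v : V ⊕ V →₀ ℕ, expoSum c u = expoSum c v →
    ∑ i, (u (Sum.inl i) - v (Sum.inl i)) ≤ N →
    monomial u (1 : K) - monomial v 1 ∈ bi K (sameColor c) := by
  induction N with
  | zero =>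
    intro u v huv hN
    have hle : ∀ i, u (Sum.inl i) ≤ v (Sum.inl i) := fun i => by
      have := Finset.sum_eq_zero_iff.1 (Nat.le_zero.1 hN) i (Finset.mem_univ i)
      omega
    have heq : ∀ i, u (Sum.inl i) = v (Sum.inl i) := fun i => by
      have h1 := DFunLike.congr_fun huv (Sum.inl (c i))
      rw [expoSum_inl, expoSum_inl] at h1
      exact (Finset.sum_eq_sum_iff_of_le (fun i _ => hle i)).1 h1 i (by simp)
    have : u = v := by
      ext (i | i)
      · exact heq i
      · have h1 := DFunLike.congr_fun huv (Sum.inr i)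
        rw [expoSum_inr, expoSum_inr, heq i] at h1
        omega
    rw [this, sub_self]
    exact Ideal.zero_mem _
  | succ N ih =>
    intro u v huv hN
    by_cases hle : ∀ i, u (Sum.inl i) ≤ v (Sum.inl i)
    · exact ih u v huv (by simp [Nat.sub_eq_zero_of_le (hle _)])
    push Not at hle
    obtain ⟨i, hi⟩ := hle
    obtain ⟨j, hj, hij⟩ : ∃ j, u (Sum.inl j) < v (Sum.inl j) ∧ c j = c i := by
      by_contra! hcon
      have h1 := DFunLike.congr_fun huv (Sum.inl (c i))
      rw [expoSum_inl, expoSum_inl] at h1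
      refine h1.not_gt (Finset.sum_lt_sum (fun k hk => ?_) ⟨i, by simp, hi⟩)
      by_contra! h2
      exact hcon k h2 (by simpa using hk)
    have hne : i ≠ j := by rintro rfl; omega
    have hyj : 0 < u (Sum.inr j) := by
      have h1 := DFunLike.congr_fun huv (Sum.inr j)
      rw [expoSum_inr, expoSum_inr] at h1
      omega
    obtain ⟨w, rfl⟩ : ∃ w, u = w + Finsupp.single (Sum.inl i) 1 + Finsupp.single (Sum.inr j) 1 := by
      refine ⟨u - Finsupp.single (Sum.inl i) 1 - Finsupp.single (Sum.inr j) 1, ?_⟩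
      ext (k | k) <;> simp [Finsupp.single_apply]
      · split_ifs with h
        · subst h; omega
        · rfl
      · split_ifs with h
        · subst h; omega
        · rfl
    set u' := w + Finsupp.single (Sum.inl j) 1 + Finsupp.single (Sum.inr i) 1 with hu'
    have h1 : monomial (w + Finsupp.single (Sum.inl i) 1 + Finsupp.single (Sum.inr j) 1) (1 : K)
        - monomial u' 1 = monomial w 1 * mnr K i j := by
      simp only [hu', mnr, xv, yv, X, mul_sub, monomial_mul, mul_one, ← add_assoc]
    have h2 : expoSum c u' = expoSum c v := by
      rw [← huv]
      ext (k | k)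
      · simp only [expoSum_eq, hu', Finsupp.add_apply, add_smul, Finset.sum_add_distrib]
        simp [Finsupp.single_apply, expo, hij, ite_smul]
      · simp only [expoSum_inr, hu', Finsupp.add_apply]
        simp [Finsupp.single_apply]
        ring
    have h3 : ∑ k, (u' (Sum.inl k) - v (Sum.inl k)) ≤ N := by
      refine Nat.lt_succ_iff.1 (lt_of_lt_of_le (Finset.sum_lt_sum (fun k _ => ?_)
        ⟨i, Finset.mem_univ i, ?_⟩) hN)
      · by_cases hkj : j = k
        · subst hkj
          simp [hu', hne] at hj ⊢
          omega
        · simp [hu', Finsupp.single_apply, hkj]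
          omega
      · simp [hu', hne.symm] at hi ⊢
        omega
    have h4 := Ideal.add_mem _ (Ideal.mul_mem_left _ (monomial w (1 : K))
      (mnr_mem_bi (K := K) (E := sameColor c) (i := i) (j := j) hij.symm)) (ih u' v h2 h3)
    rw [← h1, sub_add_sub_cancel] at h4
    exact h4

/-- The parametrisation as a homomorphism into a polynomial ring. -/
def param (K : Type) [Field K] (c : V → W) :
    MvPolynomial (V ⊕ V) K →ₐ[K] MvPolynomial (W ⊕ V) K :=
  aeval fun k => monomial (expo c k) 1

lemma param_monomial (c : V → W) (u : V ⊕ V →₀ ℕ) (a : K) :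
    param K c (monomial u a) = monomial (expoSum c u) a := by
  rw [param, aeval_monomial, expoSum, monomial_finsupp_sum_index]
  simp [monomial_pow, algebraMap_eq]

/-- The minors with equally coloured columns generate the kernel of the parametrisation. -/
lemma mem_bi_sameColor (c : V → W) (h : MvPolynomial (V ⊕ V) K) (hh : param K c h = 0) :
    h ∈ bi K (sameColor c) := by
  let ψ := (basisMonomials (W ⊕ V) K).constr K
    (fun m => (monomial (Function.invFun (expoSum c) m) 1 : MvPolynomial (V ⊕ V) K))
  have hψ : ∀ m a, ψ (monomial m a) = monomial (Function.invFun (expoSum c) m) a := by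
    intro m a
    have : (monomial m a : MvPolynomial (W ⊕ V) K) = a • basisMonomials (W ⊕ V) K m := by
      simp [smul_monomial]
    rw [this, map_smul, Module.Basis.constr_basis, smul_monomial, smul_eq_mul, mul_one]
  have key : ∀ h, h - ψ (param K c h) ∈ bi K (sameColor c) := by
    intro h
    induction h using MvPolynomial.induction_on' with
    | monomial u a =>
      rw [param_monomial, hψ]
      have h1 := monomial_sub_mem (K := K) c _ u (Function.invFun (expoSum c) (expoSum c u))
        (Function.invFun_eq ⟨u, rfl⟩).symm le_rfl
      have h2 := Ideal.mul_mem_left _ (C a) h1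
      rwa [mul_sub, C_mul_monomial, C_mul_monomial, mul_one] at h2
    | add p q hp hq =>
      have := Ideal.add_mem _ hp hq
      rw [map_add, map_add]
      convert this using 1
      ring
  simpa [hh] using key h

lemma param_mnr (c : V → W) {i j : V} (h : c i = c j) : param K c (mnr K i j) = 0 := by
  simp only [mnr, xv, yv, map_sub, map_mul, param, aeval_X, expo, Sum.elim_inl, Sum.elim_inr,
    monomial_mul, h]
  rw [sub_eq_zero]
  congr 1
  abel_nf

/-- The kernel of the parametrisation is prime and contains no variable. -/
lemma nzd_xv_sameColor (c : V → W) (i : V) : NZD (bi K (sameColor c)) (xv K i) := by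
  intro h hh
  have hle : bi K (sameColor c) ≤ RingHom.ker (param K c) :=
    bi_le fun i j hij => param_mnr c hij
  have h1 := hle hh
  rw [RingHom.mem_ker, map_mul] at h1
  refine mem_bi_sameColor c h ((mul_eq_zero.1 h1).resolve_left ?_)
  simp [xv, param]

/-- The pairs in a vertex set `A`, so that `bi K (clq A)` is the ideal of the complete graph
on `A`. -/
def clq (A : Finset V) : Set (V × V) := {e | e.1 ∈ A ∧ e.2 ∈ A}

/-- The complete graph on `A` is the case of the colouring with one colour on `A`, and one further
colour for each vertex outside `A`. -/
lemma nzd_xv_clq (A : Finset V) (i : V) : NZD (bi K (clq A)) (xv K i) := by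
  let c : V → Option V := fun j => if j ∈ A then none else some j
  have : bi K (clq A) = bi K (sameColor c) := by
    refine le_antisymm (bi_mono ?_) (bi_le fun i j hij => ?_)
    · rintro ⟨i, j⟩ ⟨hi, hj⟩
      simp only [sameColor, c, Set.mem_ofPred_eq] at *
      simp [hi, hj]
    · simp only [sameColor, c, Set.mem_ofPred_eq] at hij
      by_cases hi : i ∈ A <;> by_cases hj : j ∈ A
      · exact mnr_mem_bi ⟨hi, hj⟩
      · simp [hi, hj] at hij
      · simp [hi, hj] at hij
      · simp only [hi, hj, if_false, Option.some.injEq] at hij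
        rw [hij, mnr_self]
        exact Ideal.zero_mem _
  rw [this]
  exact nzd_xv_sameColor c i

end toric

/-! ### The complete graph: depth -/

section graphs
variable {V : Type} [DecidableEq V] {K : Type} [Field K]

lemma X_mem_mIdeal {τ : Type} (v : τ) : (X v : MvPolynomial τ K) ∈ mIdeal K τ :=
  Ideal.subset_span ⟨v, rfl⟩

lemma xv_mem_mIdeal (i : V) : xv K i ∈ mIdeal K (V ⊕ V) := X_mem_mIdeal _

/-- The ideal generated by a finite set of variables. -/
def varIdeal (K : Type) [Field K] {τ : Type} (T : Finset τ) : Ideal (MvPolynomial τ K) :=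
  Ideal.span (X '' (T : Set τ))

lemma X_mem_varIdeal {τ : Type} {T : Finset τ} {v : τ} (h : v ∈ T) :
    (X v : MvPolynomial τ K) ∈ varIdeal K T := Ideal.subset_span ⟨v, h, rfl⟩

lemma freeOf_varIdeal {τ : Type} [DecidableEq τ] {T : Finset τ} {v : τ} (h : v ∉ T) :
    FreeOf v (varIdeal K T) := by
  refine freeOf_span ?_
  rintro _ ⟨j, hj, rfl⟩
  exact toPoly_X_of_ne (fun e => h (e ▸ hj))

/-- The quotient by a set `T` of variables has depth at least the number of the others. -/
lemma depthGE_vars {τ : Type} [DecidableEq τ] [Fintype τ] (T : Finset τ) :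
    DepthGE (mIdeal K τ) (Tᶜ : Finset τ).card (MvPolynomial τ K ⧸ varIdeal K T) := by
  induction hk : (Tᶜ : Finset τ).card generalizing T with
  | zero => exact depthGE_zero
  | succ k ih =>
    obtain ⟨v, hv⟩ := Finset.card_pos.1 (by rw [hk]; exact Nat.succ_pos k)
    refine (freeOf_varIdeal (Finset.mem_compl.1 hv)).nzd_X.depth_of_quot (X_mem_mIdeal v) ?_
    have h1 := ih (insert v T) (by
      rw [Finset.compl_insert, Finset.card_erase_of_mem hv, hk]; rfl)
    rwa [varIdeal, Finset.coe_insert, Set.image_insert_eq, Ideal.span_insert, sup_comm] at h1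

/-- Adding the two variables of the vertex `a` to an ideal. -/
def kill (a : V) (I : Ideal (MvPolynomial (V ⊕ V) K)) : Ideal (MvPolynomial (V ⊕ V) K) :=
  I ⊔ Ideal.span {xv K a} ⊔ Ideal.span {yv K a}

lemma le_kill (a : V) (I : Ideal (MvPolynomial (V ⊕ V) K)) : I ≤ kill a I :=
  le_sup_left.trans le_sup_left

lemma xv_mem_kill (a : V) (I : Ideal (MvPolynomial (V ⊕ V) K)) : xv K a ∈ kill a I :=
  Ideal.mem_sup_left (Ideal.mem_sup_right (Ideal.mem_span_singleton_self _))

lemma yv_mem_kill (a : V) (I : Ideal (MvPolynomial (V ⊕ V) K)) : yv K a ∈ kill a I :=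
  Ideal.mem_sup_right (Ideal.mem_span_singleton_self _)

lemma kill_le {a : V} {I J : Ideal (MvPolynomial (V ⊕ V) K)} (h : I ≤ J) (hx : xv K a ∈ J)
    (hy : yv K a ∈ J) : kill a I ≤ J :=
  sup_le (sup_le h ((Ideal.span_singleton_le_iff_mem J).2 hx))
    ((Ideal.span_singleton_le_iff_mem J).2 hy)

lemma bi_le_kill {a : V} {E : Set (V × V)} {J : Ideal (MvPolynomial (V ⊕ V) K)}
    (h : ∀ i j, (i, j) ∈ E → i ≠ a → j ≠ a → mnr K i j ∈ J) (hx : xv K a ∈ J)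
    (hy : yv K a ∈ J) : bi K E ≤ J := by
  refine bi_le fun i j hij => ?_
  by_cases hi : i = a
  · subst hi
    exact J.sub_mem (J.mul_mem_right _ hx) (J.mul_mem_left _ hy)
  by_cases hj : j = a
  · subst hj
    exact J.sub_mem (J.mul_mem_left _ hy) (J.mul_mem_right _ hx)
  exact h i j hij hi hj

/-- Modulo the variables of `a`, the pairs involving `a` are irrelevant. -/
lemma kill_bi_eq {a : V} {E F : Set (V × V)} (h : ∀ i j, i ≠ a → j ≠ a → ((i, j) ∈ E ↔ (i, j) ∈ F)) :
    kill a (bi K E) = kill a (bi K F) := by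
  refine le_antisymm (kill_le ?_ (xv_mem_kill _ _) (yv_mem_kill _ _))
    (kill_le ?_ (xv_mem_kill _ _) (yv_mem_kill _ _))
  · exact bi_le_kill (fun i j hij hi hj => le_kill _ _ (mnr_mem_bi ((h i j hi hj).1 hij)))
      (xv_mem_kill _ _) (yv_mem_kill _ _)
  · exact bi_le_kill (fun i j hij hi hj => le_kill _ _ (mnr_mem_bi ((h i j hi hj).2 hij)))
      (xv_mem_kill _ _) (yv_mem_kill _ _)

lemma Avoids.depth_kill {a : V} {I : Ideal (MvPolynomial (V ⊕ V) K)} (h : Avoids a I) {k : ℕ}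
    (hk : DepthGE (mIdeal K (V ⊕ V)) (k + 2) (MvPolynomial (V ⊕ V) K ⧸ I)) :
    DepthGE (mIdeal K (V ⊕ V)) k (MvPolynomial (V ⊕ V) K ⧸ kill a I) :=
  h.nzd_yv.depth_quot (h.1.nzd_X.depth_quot hk)

lemma Avoids.dim_kill {a : V} {I : Ideal (MvPolynomial (V ⊕ V) K)} (h : Avoids a I) :
    ringKrullDim (MvPolynomial (V ⊕ V) K ⧸ kill a I) + 1 + 1 ≤
      ringKrullDim (MvPolynomial (V ⊕ V) K ⧸ I) :=
  (add_le_add_left h.nzd_yv.dim_quot 1).trans h.1.nzd_X.dim_quot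

lemma avoids_clq {A : Finset V} {a : V} (ha : a ∉ A) : Avoids a (bi K (clq A)) :=
  avoids_bi fun _ _ h => ⟨fun e => ha (e ▸ h.1), fun e => ha (e ▸ h.2)⟩

variable [Fintype V]

/-- The variables `x_i`, `i ∈ A`. -/
def xset (A : Finset V) : Finset (V ⊕ V) := A.map ⟨Sum.inl, Sum.inl_injective⟩

lemma two_mul_card_le (A : Finset V) :
    ((xset A)ᶜ : Finset (V ⊕ V)).card + A.card = 2 * Fintype.card V := by
  have := Finset.card_le_univ A
  rw [Finset.card_compl, xset, Finset.card_map, Fintype.card_sum]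
  omega

lemma xv_mem_varIdeal {A : Finset V} {i : V} (h : i ∈ A) : xv K i ∈ varIdeal K (xset A) :=
  X_mem_varIdeal (by simpa [xset] using h)

lemma clq_singleton (a : V) : bi K (clq {a}) = ⊥ := by
  rw [eq_bot_iff]
  refine bi_le fun i j hij => ?_
  obtain ⟨h1, h2⟩ := hij
  rw [Finset.mem_singleton] at h1 h2
  dsimp only at h1 h2
  rw [h1, h2, mnr_self]
  exact Ideal.zero_mem _

/-- With `P_A = bi K (clq A)`, the colon ideal of `P_A + (x_a)` by `y_a` is generated by the
variables `x_i`, `i ∈ A`. -/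
lemma yv_mul_mem_iff {A : Finset V} {a : V} (ha : a ∈ A) (h : MvPolynomial (V ⊕ V) K) :
    yv K a * h ∈ bi K (clq A) ⊔ Ideal.span {xv K a} ↔ h ∈ varIdeal K (xset A) := by
  constructor
  · intro hh
    have hfree : FreeOf (Sum.inr a) (varIdeal K (xset A)) := freeOf_varIdeal (by simp [xset])
    refine hfree.nzd_X h ((?_ : bi K (clq A) ⊔ Ideal.span {xv K a} ≤ _) hh)
    refine sup_le (bi_le fun i j hij => ?_)
      ((Ideal.span_singleton_le_iff_mem _).2 (xv_mem_varIdeal ha))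
    exact Ideal.sub_mem _ (Ideal.mul_mem_right _ _ (xv_mem_varIdeal hij.1))
      (Ideal.mul_mem_right _ _ (xv_mem_varIdeal hij.2))
  · intro hh
    induction hh using Submodule.span_induction with
    | mem f hf =>
      obtain ⟨_, hj, rfl⟩ := hf
      obtain ⟨j, hj, rfl⟩ := by simpa [xset] using hj
      have h1 : yv K a * xv K j = xv K a * yv K j - mnr K a j := by simp only [mnr]; ring
      change yv K a * xv K j ∈ _
      rw [h1]
      exact Ideal.sub_mem _ (Ideal.mem_sup_right (Ideal.mul_mem_right _ _
        (Ideal.mem_span_singleton_self _))) (Ideal.mem_sup_left (mnr_mem_bi ⟨ha, by simpa [xset] using hj⟩))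
    | zero => rw [mul_zero]; exact Ideal.zero_mem _
    | add f g _ _ hf hg => rw [mul_add]; exact Ideal.add_mem _ hf hg
    | smul c f _ hf => rw [smul_eq_mul, mul_left_comm]; exact Ideal.mul_mem_left _ _ hf

/-- The quotient by the `2`-minors of the columns in `A` has depth at least `2n - |A| + 1`, where
`n = |V|`. For `a ∈ A` the variable `x_a` is regular on `S/P_A`; modulo `P_A + (x_a)` the colon
ideal by `y_a` is generated by variables, and adding `y_a` leaves the ideal of `A \ {a}`. -/
lemma depthGE_clq {A : Finset V} (hA : A.Nonempty) {k : ℕ}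
    (hk : k + A.card ≤ 2 * Fintype.card V + 1) :
    DepthGE (mIdeal K (V ⊕ V)) k (MvPolynomial (V ⊕ V) K ⧸ bi K (clq A)) := by
  induction hA using Finset.Nonempty.cons_induction generalizing k with
  | singleton a =>
    have h1 : bi K (clq {a}) = varIdeal K ∅ := by simp [clq_singleton, varIdeal]
    rw [h1]
    refine (depthGE_vars ∅).mono ?_
    rw [Finset.compl_empty, Finset.card_univ, Fintype.card_sum]
    rw [Finset.card_singleton] at hk
    omega
  | cons a B ha hB ih =>
    rw [Finset.card_cons] at hk
    obtain _ | k := k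
    · exact depthGE_zero
    refine (nzd_xv_clq _ a).depth_of_quot (xv_mem_mIdeal _) ?_
    refine DepthGE.colon (yv_mul_mem_iff (Finset.mem_cons_self a B)) ?_ ?_
    · refine (depthGE_vars _).mono ?_
      have := two_mul_card_le (Finset.cons a B ha)
      rw [Finset.card_cons] at this
      omega
    · have : bi K (clq (Finset.cons a B ha)) ⊔ Ideal.span {xv K a} ⊔ Ideal.span {yv K a} =
          kill a (bi K (clq B)) := kill_bi_eq fun i j hi hj => by simp [clq, hi, hj]
      rw [this]
      exact (avoids_clq ha).depth_kill (ih (by omega))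

end graphs

/-! ### Complete graphs with a path attached, and cycles -/

section cycles
variable {V : Type} [DecidableEq V] {K : Type} [Field K]

/-- The edges of the path with vertices `c :: l`. -/
def pth : V → List V → Set (V × V)
  | _, [] => ∅
  | c, d :: l => insert (c, d) (pth d l)

/-- The path `c :: l` ends in `A`, has no other vertex in `A`, and does not repeat vertices. -/
inductive Tail (A : Finset V) : V → List V → Prop
  | base {b : V} (hb : b ∈ A) : Tail A b []
  | cons {c d : V} {l : List V} (h : Tail A d l) (hc : c ∉ A) (hcl : c ∉ d :: l) :
      Tail A c (d :: l)

lemma mem_pth {c : V} {l : List V} {i j : V} (h : (i, j) ∈ pth c l) : i ∈ c :: l ∧ j ∈ c :: l := by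
  induction l generalizing c with
  | nil => exact h.elim
  | cons d l ih =>
    rcases h with h | h
    · obtain ⟨rfl, rfl⟩ := Prod.mk.inj h
      simp
    · exact ⟨List.mem_cons_of_mem _ (ih h).1, List.mem_cons_of_mem _ (ih h).2⟩

/-- Passing from `A` to `B`, where `A ⊆ B` and the path does not meet `B \ A`. -/
lemma Tail.mono {A B : Finset V} {c : V} {l : List V} (h : Tail A c l) (hAB : A ⊆ B)
    (hB : ∀ v ∈ c :: l, v ∈ B → v ∈ A) : Tail B c l := by
  induction h with
  | base hb => exact Tail.base (hAB hb)
  | cons h hc hcl ih =>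
    exact Tail.cons (ih fun v hv => hB v (List.mem_cons_of_mem _ hv))
      (fun h => hc (hB _ (by simp) h)) hcl

lemma Tail.nonempty {A : Finset V} {c : V} {l : List V} (h : Tail A c l) : A.Nonempty := by
  induction h with
  | base hb => exact ⟨_, hb⟩
  | cons _ _ _ ih => exact ih

lemma bi_insert (E : Set (V × V)) (i j : V) :
    bi K (insert (i, j) E) = bi K E ⊔ Ideal.span {mnr K i j} := by
  rw [bi, Set.image_insert_eq, Ideal.span_insert, sup_comm]; rfl

lemma avoids_clq_pth {A : Finset V} {a c : V} {l : List V} (ha : a ∉ A) (hl : a ∉ c :: l) :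
    Avoids a (bi K (clq A ∪ pth c l)) :=
  avoids_bi fun i j h => by
    rcases h with h | h
    · exact ⟨fun e => ha (e ▸ h.1), fun e => ha (e ▸ h.2)⟩
    · exact ⟨fun e => hl (e ▸ (mem_pth h).1), fun e => hl (e ▸ (mem_pth h).2)⟩

variable [Fintype V]

/-- Attaching a path to a complete graph: every edge of the path cuts down the depth and the
dimension by one. -/
lemma Tail.bounds {A : Finset V} {c : V} {l : List V} (h : Tail A c l) :
    NZD (bi K (clq A ∪ pth c l)) (xv K c) ∧
    (∀ k, k + A.card + l.length ≤ 2 * Fintype.card V + 1 →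
      DepthGE (mIdeal K (V ⊕ V)) k (MvPolynomial (V ⊕ V) K ⧸ bi K (clq A ∪ pth c l))) ∧
    ringKrullDim (MvPolynomial (V ⊕ V) K ⧸ bi K (clq A ∪ pth c l)) + l.length ≤
      ringKrullDim (MvPolynomial (V ⊕ V) K ⧸ bi K (clq A)) := by
  induction h with
  | @base b hb =>
    rw [pth, Set.union_empty]
    exact ⟨nzd_xv_clq A b, fun k hk => depthGE_clq ⟨b, hb⟩ (by simpa using hk), by simp⟩
  | @cons c d l h hc hcl ih =>
    obtain ⟨h1, h2, h3⟩ := ih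
    have hcd : c ≠ d := fun e => hcl (by simp [e])
    have hav : Avoids c (bi K (clq A ∪ pth d l)) := avoids_clq_pth hc hcl
    rw [pth, Set.union_insert, bi_insert]
    refine ⟨hav.nzd_leaf hcd h1, fun k hk => ?_, ?_⟩
    · rw [List.length_cons] at hk
      exact (hav.2.nzd_mnr hcd h1).depth_quot (h2 _ (by omega))
    · refine le_trans ?_ h3
      rw [List.length_cons]
      push_cast
      rw [add_comm (l.length : WithBot ℕ∞) 1, ← add_assoc]
      exact add_le_add_left (hav.2.nzd_mnr hcd h1).dim_quot _

/-- The substitution `x_a = y_a = 0`. -/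
def zeroAt (K : Type) [Field K] (a : V) : MvPolynomial (V ⊕ V) K →ₐ[K] MvPolynomial (V ⊕ V) K :=
  aeval fun k => if k = Sum.inl a ∨ k = Sum.inr a then 0 else X k

lemma sub_zeroAt_mem (a : V) (h : MvPolynomial (V ⊕ V) K) :
    h - zeroAt K a h ∈ kill a (⊥ : Ideal (MvPolynomial (V ⊕ V) K)) := by
  induction h using MvPolynomial.induction_on with
  | C r => simp [zeroAt, algebraMap_eq]
  | add p q hp hq =>
    rw [map_add, add_sub_add_comm]
    exact Ideal.add_mem _ hp hq
  | mul_X p k hp =>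
    by_cases hk : k = Sum.inl a ∨ k = Sum.inr a
    · have : zeroAt K a (X k) = 0 := by simp [zeroAt, hk]
      rw [map_mul, this, mul_zero, sub_zero]
      refine Ideal.mul_mem_left _ _ ?_
      rcases hk with rfl | rfl
      · exact xv_mem_kill _ _
      · exact yv_mem_kill _ _
    · have : zeroAt K a (X k) = X k := by simp [zeroAt, hk]
      rw [map_mul, this, ← sub_mul]
      exact Ideal.mul_mem_right _ _ hp

lemma zeroAt_xv_self (a : V) : zeroAt K a (xv K a) = 0 := by simp [zeroAt, xv]

lemma zeroAt_yv_self (a : V) : zeroAt K a (yv K a) = 0 := by simp [zeroAt, yv]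

lemma zeroAt_mnr {a i j : V} (hi : i ≠ a) (hj : j ≠ a) : zeroAt K a (mnr K i j) = mnr K i j := by
  simp [zeroAt, mnr, xv, yv, hi, hj]

lemma zeroAt_mnr_eq_zero {a i j : V} (h : i = a ∨ j = a) : zeroAt K a (mnr K i j) = 0 := by
  rcases h with rfl | rfl <;> simp [zeroAt, mnr, xv, yv]

lemma zeroAt_mem_of_mem_kill {a : V} {E : Set (V × V)} {h : MvPolynomial (V ⊕ V) K}
    (hh : h ∈ kill a (bi K E)) : zeroAt K a h ∈ bi K E := by
  have : kill a (bi K E) ≤ (bi K E).comap (zeroAt K a) := by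
    refine kill_le (bi_le fun i j hij => ?_) ?_ ?_
    · rw [Ideal.mem_comap]
      by_cases hk : i = a ∨ j = a
      · rw [zeroAt_mnr_eq_zero hk]
        exact Ideal.zero_mem _
      · push Not at hk
        rw [zeroAt_mnr hk.1 hk.2]
        exact mnr_mem_bi hij
    · rw [Ideal.mem_comap, zeroAt_xv_self]
      exact Ideal.zero_mem _
    · rw [Ideal.mem_comap, zeroAt_yv_self]
      exact Ideal.zero_mem _
  exact this hh

lemma mul_mem_of_edges {F : Set (V × V)} {J : Ideal (MvPolynomial (V ⊕ V) K)}
    {r f : MvPolynomial (V ⊕ V) K} (h : ∀ i j, (i, j) ∈ F → r * mnr K i j ∈ J)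
    (hf : f ∈ bi K F) : r * f ∈ J := by
  induction hf using Submodule.span_induction with
  | mem f hf =>
    obtain ⟨⟨i, j⟩, hij, rfl⟩ := hf
    exact h i j hij
  | zero => rw [mul_zero]; exact Ideal.zero_mem _
  | add f g _ _ hf hg => rw [mul_add]; exact Ideal.add_mem _ hf hg
  | smul c f _ hf => rw [smul_eq_mul, mul_left_comm]; exact Ideal.mul_mem_left _ _ hf

/-- If `F` arises from `E` by joining neighbours of `a`, then `I_E = I_F ∩ ((x_a, y_a) + I_E)`.
The point is that `x_a` and `y_a` multiply `I_F` into `I_E`. -/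
lemma bi_eq_inf {a : V} {E F : Set (V × V)} (hEF : E ⊆ F)
    (h : ∀ i j, (i, j) ∈ F → mnr K i j ∈ bi K E ∨ (mnr K a i ∈ bi K E ∧ mnr K a j ∈ bi K E)) :
    bi K F ⊓ kill a (bi K E) = bi K E := by
  refine le_antisymm ?_ (le_inf (bi_mono hEF) (le_kill _ _))
  rintro f ⟨hF, hk⟩
  have key : ∀ f ∈ bi K F, f - zeroAt K a f ∈ bi K E := by
    intro f hf
    induction hf using Submodule.span_induction with
    | mem f hf =>
      obtain ⟨⟨i, j⟩, hij, rfl⟩ := hf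
      dsimp only
      by_cases hk : i = a ∨ j = a
      · rw [zeroAt_mnr_eq_zero hk, sub_zero]
        rcases h i j hij with h | ⟨h1, h2⟩
        · exact h
        · rcases hk with rfl | rfl
          · exact h2
          · rw [mnr_swap]; exact neg_mem h1
      · push Not at hk
        rw [zeroAt_mnr hk.1 hk.2, sub_self]
        exact Ideal.zero_mem _
    | zero => simp
    | add f g _ _ hf hg =>
      rw [map_add, add_sub_add_comm]
      exact Ideal.add_mem _ hf hg
    | smul c f hf ih =>
      -- `c f - ε(c) ε(f) = (c - ε(c)) f + ε(c) (f - ε(f))`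
      have h1 : c • f - zeroAt K a (c • f) =
          (c - zeroAt K a c) * f + zeroAt K a c * (f - zeroAt K a f) := by
        rw [smul_eq_mul, map_mul]; ring
      rw [h1]
      refine Ideal.add_mem _ ?_ (Ideal.mul_mem_left _ _ ih)
      have hx := mul_mem_of_edges (r := xv K a) (fun i j hij => by
        rcases h i j hij with h | ⟨h1, h2⟩
        · exact Ideal.mul_mem_left _ _ h
        · rw [xv_mul_mnr, mnr_swap i a]
          exact Ideal.add_mem _ (Ideal.mul_mem_left _ _ h2)
            (Ideal.mul_mem_left _ _ (neg_mem h1))) hf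
      have hy := mul_mem_of_edges (r := yv K a) (fun i j hij => by
        rcases h i j hij with h | ⟨h1, h2⟩
        · exact Ideal.mul_mem_left _ _ h
        · rw [yv_mul_mnr, mnr_swap i a]
          exact Ideal.add_mem _ (Ideal.mul_mem_left _ _ h2)
            (Ideal.mul_mem_left _ _ (neg_mem h1))) hf
      obtain ⟨q, hq⟩ := mem_sup_span_singleton.1 (sub_zeroAt_mem a c)
      obtain ⟨p, hp⟩ := mem_sup_span_singleton.1 hq
      rw [Ideal.mem_bot, sub_sub, sub_eq_zero] at hp
      have h2 : (c - zeroAt K a c) * f = q * (yv K a * f) + p * (xv K a * f) := by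
        rw [hp]; ring
      rw [h2]
      exact Ideal.add_mem _ (Ideal.mul_mem_left _ _ hy) (Ideal.mul_mem_left _ _ hx)
  have := Ideal.add_mem _ (key f hF) (zeroAt_mem_of_mem_kill hk)
  simpa using this

/-- The graph consisting of a complete graph on `A` and a path from `a ∈ A` to another vertex
of `A` has depth at least `2n - |A| - |l|`, where `n = |V|` and `|A| + |l|` is its number of vertices.
The induction absorbs the neighbour `w` of `a` on the path into the complete graph: the ideal is
the intersection of the ideal obtained in this way and the one obtained by deleting `a`. -/
lemma depthGE_cycle {l : List V} : ∀ {A : Finset V} {a w : V} {k : ℕ}, a ∈ A → a ≠ w → a ∉ l →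
    Tail (A.erase a) w l → k + A.card + l.length ≤ 2 * Fintype.card V →
    DepthGE (mIdeal K (V ⊕ V)) k
      (MvPolynomial (V ⊕ V) K ⧸ bi K (insert (a, w) (clq A ∪ pth w l))) := by
  induction l with
  | nil =>
    intro A a w k ha haw hal h hk
    obtain ⟨hw⟩ := h
    have : insert (a, w) (clq A ∪ pth w []) = clq A := by
      rw [pth, Set.union_empty, Set.insert_eq_of_mem]
      exact ⟨ha, Finset.mem_of_mem_erase hw⟩
    rw [this]
    exact depthGE_clq ⟨a, ha⟩ (by rw [List.length_nil] at hk; omega)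
  | cons d l ih =>
    intro A a w k ha haw hal h hk
    obtain _ | k := k
    · exact depthGE_zero
    rw [List.length_cons] at hk
    have had : a ≠ d := fun e => hal (by simp [e])
    have hal' : a ∉ l := fun e => hal (by simp [e])
    have hcard : 0 < A.card := Finset.card_pos.2 ⟨a, ha⟩
    have hbd := h.bounds (K := K)
    rcases h with _ | ⟨h, hc, hcl⟩
    have hwA : w ∉ A := fun e => hc (Finset.mem_erase.2 ⟨haw.symm, e⟩)
    have hwd : w ≠ d := fun e => hcl (by simp [e])
    have hwl : w ∉ l := fun e => hcl (by simp [e])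
    -- `F` is the graph in which `w` has been absorbed into the complete graph
    set E := insert (a, w) (clq A ∪ pth w (d :: l)) with hE
    set F := insert (w, d) (clq (insert w A) ∪ pth d l) with hF
    have hEF : E ⊆ F := by
      rintro ⟨i, j⟩ (h | h | h | h)
      · obtain ⟨rfl, rfl⟩ := Prod.mk.inj h
        exact Or.inr (Or.inl ⟨Finset.mem_insert_of_mem ha, Finset.mem_insert_self _ _⟩)
      · exact Or.inr (Or.inl ⟨Finset.mem_insert_of_mem h.1, Finset.mem_insert_of_mem h.2⟩)
      · exact Or.inl h
      · exact Or.inr (Or.inr h)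
    have hnb : ∀ i ∈ insert w A, mnr K a i ∈ bi K E := fun i hi => by
      rcases Finset.mem_insert.1 hi with rfl | hi
      · exact mnr_mem_bi (Or.inl rfl)
      · exact mnr_mem_bi (Or.inr (Or.inl ⟨ha, hi⟩))
    have hinf : bi K F ⊓ kill a (bi K E) = bi K E := by
      refine bi_eq_inf hEF fun i j hij => ?_
      rcases hij with h | h | h
      · exact Or.inl (mnr_mem_bi (Or.inr (Or.inr (Or.inl h))))
      · exact Or.inr ⟨hnb i h.1, hnb j h.2⟩
      · exact Or.inl (mnr_mem_bi (Or.inr (Or.inr (Or.inr h))))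
    have hkE : kill a (bi K E) = kill a (bi K (clq (A.erase a) ∪ pth w (d :: l))) :=
      kill_bi_eq fun i j hi hj => by
        simp [hE, clq, hi, hj]
    have hkF : bi K F ⊔ kill a (bi K E) =
        kill a (bi K (insert (w, d) (clq ((insert w A).erase a) ∪ pth d l))) := by
      have h1 : kill a (bi K (insert (w, d) (clq ((insert w A).erase a) ∪ pth d l))) =
          kill a (bi K F) := kill_bi_eq fun i j hi hj => by
        simp [hF, clq, hi, hj]
      rw [h1]
      refine le_antisymm (sup_le (le_kill _ _) (kill_le ((bi_mono hEF).trans (le_kill _ _))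
        (xv_mem_kill _ _) (yv_mem_kill _ _))) (kill_le le_sup_left ?_ ?_)
      · exact Ideal.mem_sup_right (xv_mem_kill _ _)
      · exact Ideal.mem_sup_right (yv_mem_kill _ _)
    rw [← hinf]
    refine DepthGE.inf ?_ ?_ ?_
    · refine ih (Finset.mem_insert_self w A) hwd hwl ?_ ?_
      · rw [Finset.erase_insert hwA]
        refine h.mono (Finset.erase_subset _ _) fun v hv hvA => Finset.mem_erase.2 ⟨?_, hvA⟩
        rintro rfl
        exact hal hv
      · rw [Finset.card_insert_of_notMem hwA]
        omega
    · rw [hkE]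
      refine (avoids_clq_pth (Finset.notMem_erase _ _) ?_).depth_kill (hbd.2.1 _ ?_)
      · rw [List.mem_cons, not_or]
        exact ⟨haw, hal⟩
      · rw [Finset.card_erase_of_mem ha, List.length_cons]
        omega
    · rw [hkF]
      refine Avoids.depth_kill ?_ (ih ?_ hwd hwl ?_ ?_)
      · rw [← Set.union_insert]
        exact avoids_clq_pth (c := w) (l := d :: l) (Finset.notMem_erase _ _)
          (by rw [List.mem_cons, not_or]; exact ⟨haw, hal⟩)
      · exact Finset.mem_erase.2 ⟨haw.symm, Finset.mem_insert_self _ _⟩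
      · rwa [Finset.erase_right_comm, Finset.erase_insert hwA]
      · rw [Finset.card_erase_of_mem (Finset.mem_insert_of_mem ha),
          Finset.card_insert_of_notMem hwA]
        omega
end cycles

/-! ### Dimension, and the cycle on `Fin n` -/

section dimension

lemma natCast_le_of_add_le {x : WithBot ℕ∞} {a b c : ℕ} (h : x + a ≤ b) (hb : b = c + a) :
    x ≤ c := by
  induction x with
  | bot => exact bot_le
  | coe x =>
    induction x with
    | top =>
      have h' : ((⊤ + (a : ℕ∞) : ℕ∞) : WithBot ℕ∞) ≤ ((b : ℕ∞) : WithBot ℕ∞) := h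
      rw [WithBot.coe_le_coe, top_add] at h'
      exact absurd h' (by simp)
    | coe x =>
      norm_cast at h ⊢
      omega

lemma dim_anti {R : Type} [CommRing R] {I J : Ideal R} (h : I ≤ J) :
    ringKrullDim (R ⧸ J) ≤ ringKrullDim (R ⧸ I) :=
  ringKrullDim_le_of_surjective (Ideal.Quotient.factor h) (Ideal.Quotient.factor_surjective h)

/-- A bound for the dimension, from bounds on a family of closed subsets covering the
spectrum. -/
lemma dim_le_of_primes {R : Type} [CommRing R] {J : Ideal R} {d : WithBot ℕ∞}
    (h : ∀ Q : Ideal R, Q.IsPrime → J ≤ Q → ∃ J' ≤ Q, ringKrullDim (R ⧸ J') ≤ d) :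
    ringKrullDim (R ⧸ J) ≤ d := by
  rw [ringKrullDim_quotient]
  refine iSup_le fun p => ?_
  obtain ⟨J', hJ', hd⟩ := h p.head.1.asIdeal p.head.1.isPrime p.head.2
  rw [ringKrullDim_quotient] at hd
  refine le_trans ?_ hd
  let q : LTSeries (PrimeSpectrum.zeroLocus (J' : Set R)) :=
    { length := p.length
      toFun := fun i => ⟨(p i).1, hJ'.trans (p.head_le i)⟩
      step := fun i => p.step i }
  exact le_iSup_of_le q le_rfl

end dimension

section sequences
variable {V : Type} {K : Type} [Field K]

/-- The edges of the path along the values `s k, …, s (k + m)` of a sequence. -/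
lemma mem_pth_seq (s : ℕ → V) (m : ℕ) : ∀ (k : ℕ) (i j : V),
    (i, j) ∈ pth (s k) ((List.range' (k + 1) m).map s) ↔
      ∃ t, k ≤ t ∧ t < k + m ∧ i = s t ∧ j = s (t + 1) := by
  induction m with
  | zero =>
    intro k i j
    constructor
    · exact fun h => h.elim
    · rintro ⟨t, h1, h2, -⟩; omega
  | succ m ih =>
    intro k i j
    rw [List.range'_succ, List.map_cons, pth, Set.mem_insert_iff, ih, Prod.mk.injEq]
    constructor
    · rintro (⟨h1, h2⟩ | ⟨t, h1, h2, h3⟩)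
      · exact ⟨k, le_rfl, by omega, h1, h2⟩
      · exact ⟨t, by omega, by omega, h3⟩
    · rintro ⟨t, h1, h2, h3, h4⟩
      by_cases htk : t = k
      · exact Or.inl (by rw [h3, h4, htk]; exact ⟨rfl, rfl⟩)
      · exact Or.inr ⟨t, by omega, by omega, h3, h4⟩

/-- The path along `s k, …, s e` ends in the singleton `{s e}`. -/
lemma tail_seq (s : ℕ → V) (e : ℕ) (hs : Set.InjOn s (Set.Iic e)) (m : ℕ) : ∀ k, k + m = e →
    Tail {s e} (s k) ((List.range' (k + 1) m).map s) := by
  induction m with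
  | zero =>
    intro k hk
    refine Tail.base ?_
    rw [← hk]; simp
  | succ m ih =>
    intro k hk
    rw [List.range'_succ, List.map_cons]
    refine Tail.cons (ih (k + 1) (by omega)) ?_ ?_
    · rw [Finset.mem_singleton]
      intro h
      have := hs (by simp; omega) (by simp) h
      omega
    · rw [← List.map_cons (f := s), ← List.range'_succ, List.mem_map]
      rintro ⟨t, ht, h⟩
      rw [List.mem_range'_1] at ht
      have := hs (by simp; omega) (by simp; omega) h
      omega

/-- A polynomial divisible by all `x_a` multiplies, up to powers, every minor into an ideal
containing the minors of the edges of a path. -/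
lemma pow_mul_mnr_mem (s : ℕ → V) {J : Ideal (MvPolynomial (V ⊕ V) K)}
    {f : MvPolynomial (V ⊕ V) K} (hf : ∀ a, xv K a ∣ f) {e : ℕ}
    (hJ : ∀ t, t < e → mnr K (s t) (s (t + 1)) ∈ J) (d : ℕ) : ∀ i, i + d ≤ e →
    f ^ d * mnr K (s i) (s (i + d)) ∈ J := by
  induction d with
  | zero => intro i _; simp [mnr_self]
  | succ d ih =>
    intro i hi
    obtain ⟨g, hg⟩ := hf (s (i + d))
    have h1 : f ^ (d + 1) * mnr K (s i) (s (i + (d + 1))) =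
        f ^ d * g * xv K (s i) * mnr K (s (i + d)) (s (i + d + 1)) +
          g * xv K (s (i + d + 1)) * (f ^ d * mnr K (s i) (s (i + d))) := by
      have h2 := xv_mul_mnr (K := K) (s (i + d)) (s i) (s (i + d + 1))
      rw [pow_succ, ← add_assoc]
      nth_rewrite 2 [hg]
      linear_combination f ^ d * g * h2
    rw [h1]
    exact J.add_mem (J.mul_mem_left _ (hJ _ (by omega))) (J.mul_mem_left _ (ih i (by omega)))

/-- A prime containing the minors of the edges of a path, but for no vertex `v` both `x_v`
and `y_v`, contains all minors of the path. -/
lemma mnr_mem_of_prime (s : ℕ → V) {Q : Ideal (MvPolynomial (V ⊕ V) K)} (hQ : Q.IsPrime)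
    (hf : ∀ a, xv K a ∉ Q ∨ yv K a ∉ Q) {e : ℕ}
    (hJ : ∀ t, t < e → mnr K (s t) (s (t + 1)) ∈ Q) (d : ℕ) : ∀ i, i + d ≤ e →
    mnr K (s i) (s (i + d)) ∈ Q := by
  induction d with
  | zero => intro i _; simp [mnr_self]
  | succ d ih =>
    intro i hi
    have h1 := hJ (i + d) (by omega)
    have h2 := ih i (by omega)
    have hx := Q.add_mem (Q.mul_mem_left (xv K (s i)) h1) (Q.mul_mem_left (xv K (s (i + d + 1))) h2)
    have hy := Q.add_mem (Q.mul_mem_left (yv K (s i)) h1) (Q.mul_mem_left (yv K (s (i + d + 1))) h2)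
    rw [← xv_mul_mnr] at hx
    rw [← yv_mul_mnr] at hy
    rcases hf (s (i + d)) with h | h
    · exact (hQ.mem_or_mem hx).resolve_left h
    · exact (hQ.mem_or_mem hy).resolve_left h

end sequences

section cycleGraph
variable {K : Type} [Field K] {n : ℕ}

/-- The vertices of the cycle in cyclic order, starting at `v`. -/
def rot (v : Fin n) (i : ℕ) : Fin n := ⟨(v + i) % n, Nat.mod_lt _ (Fin.pos v)⟩

lemma rot_zero (v : Fin n) : rot v 0 = v := by
  ext; simp [rot, Nat.mod_eq_of_lt v.2]

lemma rot_injOn (v : Fin n) : Set.InjOn (rot v) (Set.Iic (n - 1)) := by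
  intro i hi j hj h
  have hpos := Fin.pos v
  rw [Set.mem_Iic] at hi hj
  have h1 : (v + i) % n = (v + j) % n := congrArg Fin.val h
  have h2 : i % n = j % n := Nat.ModEq.add_left_cancel' _ h1
  rwa [Nat.mod_eq_of_lt (by omega), Nat.mod_eq_of_lt (by omega)] at h2

lemma mnr_mem_bei {G : SimpleGraph (Fin n)} {i j : Fin n} (h : G.Adj i j) :
    mnr K i j ∈ bei K G := by
  rcases lt_or_gt_of_ne h.ne with hij | hij
  · exact Ideal.subset_span ⟨i, j, hij, h, rfl⟩
  · rw [mnr_swap]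
    exact neg_mem (Ideal.subset_span ⟨j, i, hij, h.symm, rfl⟩)

lemma bei_le {G : SimpleGraph (Fin n)} {J : Ideal (MvPolynomial (Fin n ⊕ Fin n) K)}
    (h : ∀ i j, i < j → G.Adj i j → mnr K i j ∈ J) : bei K G ≤ J := by
  rw [bei, Ideal.span_le]
  rintro _ ⟨i, j, hij, hadj, rfl⟩
  exact h i j hij hadj

lemma cycleG_adj_rot (hn : 3 ≤ n) (v : Fin n) (t : ℕ) :
    (cycleG n).Adj (rot v t) (rot v (t + 1)) := by
  have h1 := Nat.mod_lt (v + t) (Fin.pos v)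
  have h2 : (v + (t + 1)) % n = if (v + t) % n + 1 = n then 0 else (v + t) % n + 1 := by
    rw [← add_assoc, Nat.add_mod, Nat.mod_eq_of_lt (show 1 < n by omega)]
    split_ifs with h
    · rw [h, Nat.mod_self]
    · exact Nat.mod_eq_of_lt (by omega)
  rw [cycleG, SimpleGraph.fromRel_adj]
  simp only [rot, ne_eq, Fin.mk.injEq, h2]
  split_ifs with h <;> omega

lemma cycleG_adj_of_lt {i j : Fin n} (hij : i < j) (h : (cycleG n).Adj i j) :
    (j : ℕ) = i + 1 ∨ ((i : ℕ) = 0 ∧ (j : ℕ) = n - 1) := by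
  rw [cycleG, SimpleGraph.fromRel_adj] at h
  rw [Fin.lt_def] at hij
  have := j.2
  omega

/-- The cycle as the complete graph on two adjacent vertices together with a path. -/
lemma bei_cycleG_eq (hn : 3 ≤ n) (v : Fin n) (hv : (v : ℕ) = 0) :
    bei K (cycleG n) = bi K (insert (rot v 0, rot v 1) (clq {rot v 0, rot v (n - 1)} ∪
      pth (rot v 1) ((List.range' 2 (n - 2)).map (rot v)))) := by
  have hrot : ∀ i : Fin n, rot v i = i := fun i => by
    ext; simp [rot, hv, Nat.mod_eq_of_lt i.2]
  have hadj : (cycleG n).Adj (rot v (n - 1)) (rot v 0) := by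
    have h1 := cycleG_adj_rot hn v (n - 1)
    have : rot v (n - 1 + 1) = rot v 0 := by
      ext; simp [rot, hv, Nat.sub_add_cancel (show 1 ≤ n by omega)]
    rwa [this] at h1
  refine le_antisymm (bei_le fun i j hij h => mnr_mem_bi ?_) (bi_le fun i j h => ?_)
  · rw [← hrot i, ← hrot j]
    rcases cycleG_adj_of_lt hij h with h | ⟨h1, h2⟩
    · by_cases hi : (i : ℕ) = 0
      · exact Or.inl (by rw [h, hi])
      · refine Or.inr (Or.inr ?_)
        rw [mem_pth_seq]
        exact ⟨i, by omega, by have := j.2; omega, rfl, by rw [h]⟩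
    · refine Or.inr (Or.inl ?_)
      rw [h1, h2]
      exact ⟨by simp, by simp⟩
  · rcases h with h | ⟨h1, h2⟩ | h
    · obtain ⟨rfl, rfl⟩ := Prod.mk.inj h
      exact mnr_mem_bei (cycleG_adj_rot hn v 0)
    · rw [Finset.mem_insert, Finset.mem_singleton] at h1 h2
      dsimp only at h1 h2
      rcases h1 with rfl | rfl <;> rcases h2 with rfl | rfl
      · rw [mnr_self]; exact Ideal.zero_mem _
      · exact mnr_mem_bei hadj.symm
      · exact mnr_mem_bei hadj
      · rw [mnr_self]; exact Ideal.zero_mem _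
    · obtain ⟨t, -, -, rfl, rfl⟩ := (mem_pth_seq _ _ _ _ _).1 h
      exact mnr_mem_bei (cycleG_adj_rot hn v t)

lemma depthGE_cycleG (hn : 3 ≤ n) :
    DepthGE (mIdeal K (Fin n ⊕ Fin n)) n (MvPolynomial (Fin n ⊕ Fin n) K ⧸ bei K (cycleG n)) := by
  set v : Fin n := ⟨0, by omega⟩
  have hinj : ∀ i, 0 < i → i ≤ n - 1 → rot v 0 ≠ rot v i := fun i h1 h2 h => by
    have := rot_injOn v (by simp) (by simpa using h2) h
    omega
  rw [bei_cycleG_eq hn v rfl]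
  refine depthGE_cycle (by simp) (hinj 1 (by omega) (by omega)) ?_ ?_ ?_
  · rw [List.mem_map]
    rintro ⟨t, ht, h⟩
    rw [List.mem_range'_1] at ht
    exact hinj t (by omega) (by omega) h.symm
  · rw [Finset.erase_insert (by simpa using hinj (n - 1) (by omega) le_rfl)]
    exact tail_seq _ _ (rot_injOn v) _ 1 (by omega)
  · rw [Finset.card_pair (hinj (n - 1) (by omega) le_rfl)]
    simp only [List.length_map, List.length_range', Fintype.card_fin]
    omega

lemma dim_polynomial : ringKrullDim (MvPolynomial (Fin n ⊕ Fin n) K ⧸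
    (⊥ : Ideal (MvPolynomial (Fin n ⊕ Fin n) K))) = (2 * n : ℕ) := by
  rw [ringKrullDim_eq_of_ringEquiv (RingEquiv.quotientBot _)]
  rw [MvPolynomial.ringKrullDim_of_isNoetherianRing, ringKrullDim_eq_zero_of_field, zero_add]
  simp [two_mul]

/-- The minors of the path obtained from the cycle by removing one edge form a regular sequence of
length `n - 1`. -/
lemma dim_cycleG_le (hn : 3 ≤ n) :
    ringKrullDim (MvPolynomial (Fin n ⊕ Fin n) K ⧸ bei K (cycleG n)) ≤ (n + 1 : ℕ) := by
  set v : Fin n := ⟨0, by omega⟩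
  have h := (tail_seq _ _ (rot_injOn v) (n - 1) 0 (by omega)).bounds (K := K)
  have h3 := h.2.2
  rw [clq_singleton, dim_polynomial, List.length_map, List.length_range'] at h3
  refine (dim_anti ?_).trans (natCast_le_of_add_le h3 (by omega))
  rw [bi_union, clq_singleton, bot_sup_eq]
  refine bi_le fun i j hij => ?_
  obtain ⟨t, -, -, rfl, rfl⟩ := (mem_pth_seq _ _ _ _ _).1 hij
  exact mnr_mem_bei (cycleG_adj_rot hn v t)

/-- Removing a vertex from the cycle leaves a path on `n - 1` vertices, whose `n - 2` minors form a
regular sequence, in a polynomial ring in `2n - 2` variables. -/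
lemma dim_kill_cycleG_le (hn : 3 ≤ n) (v : Fin n) :
    ringKrullDim (MvPolynomial (Fin n ⊕ Fin n) K ⧸ kill v (bei K (cycleG n))) ≤ n := by
  have h := (tail_seq _ _ (rot_injOn v) (n - 2) 1 (by omega)).bounds (K := K)
  have hne : ∀ i, 0 < i → i ≤ n - 1 → v ≠ rot v i := fun i h1 h2 h => by
    have := rot_injOn v (by simp) (by simpa using h2) ((rot_zero v).trans h)
    omega
  have hav : Avoids v (bi K (clq {rot v (n - 1)} ∪
      pth (rot v 1) ((List.range' 2 (n - 2)).map (rot v)))) := by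
    refine avoids_clq_pth (by simpa using hne (n - 1) (by omega) le_rfl) ?_
    rw [List.mem_cons, not_or, List.mem_map]
    refine ⟨hne 1 (by omega) (by omega), ?_⟩
    rintro ⟨t, ht, h⟩
    rw [List.mem_range'_1] at ht
    exact hne t (by omega) (by omega) h.symm
  have h3 := (add_le_add_left hav.dim_kill ((n - 2 : ℕ) : WithBot ℕ∞)).trans
    (by simpa using h.2.2)
  rw [clq_singleton, dim_polynomial] at h3
  have h4 := natCast_le_of_add_le (c := n + 1 + 1) h3 (by omega)
  have h5 : ringKrullDim (MvPolynomial (Fin n ⊕ Fin n) K ⧸ kill v (bi K (clq {rot v (n - 1)} ∪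
      pth (rot v 1) ((List.range' 2 (n - 2)).map (rot v))))) ≤ n := by
    refine natCast_le_of_add_le (a := 2) (b := n + 2) ?_ rfl
    refine le_trans (le_of_eq ?_) h4
    rw [add_assoc]
    norm_num
  refine (dim_anti (kill_le ?_ (xv_mem_kill _ _) (yv_mem_kill _ _))).trans h5
  rw [bi_union, clq_singleton, bot_sup_eq]
  refine le_trans (bi_le fun i j hij => ?_) (le_kill _ _)
  obtain ⟨t, -, -, rfl, rfl⟩ := (mem_pth_seq _ _ _ _ _).1 hij
  exact mnr_mem_bei (cycleG_adj_rot hn v t)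

end cycleGraph

/-! ### The cycle is approximately Cohen-Macaulay -/

section approximatelyCM
variable {K : Type} [Field K] {n : ℕ}

lemma mIdeal_ne_top (σ : Type) : mIdeal K σ ≠ ⊤ := by
  intro h
  have hle : mIdeal K σ ≤ RingHom.ker (constantCoeff (σ := σ) (R := K)) := by
    rw [mIdeal, Ideal.span_le]
    rintro _ ⟨i, rfl⟩
    simp [RingHom.mem_ker]
  have h1 : (1 : MvPolynomial σ K) ∈ RingHom.ker (constantCoeff (σ := σ) (R := K)) :=
    hle (h ▸ Submodule.mem_top)
  simp [RingHom.mem_ker] at h1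

lemma bi_le_mIdeal {V : Type} [DecidableEq V] (E : Set (V × V)) : bi K E ≤ mIdeal K (V ⊕ V) :=
  bi_le fun i j _ => sub_mem (Ideal.mul_mem_right _ _ (xv_mem_mIdeal i))
    (Ideal.mul_mem_right _ _ (xv_mem_mIdeal j))

lemma bei_le_clq (G : SimpleGraph (Fin n)) : bei K G ≤ bi K (clq Finset.univ) :=
  bei_le fun i j _ _ => mnr_mem_bi ⟨Finset.mem_univ i, Finset.mem_univ j⟩

/-- The `n`-th power of the product of the variables `x_i`: the element that witnesses
approximate Cohen-Macaulayness. -/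
def wit (K : Type) [Field K] (n : ℕ) : MvPolynomial (Fin n ⊕ Fin n) K :=
  (∏ i : Fin n, xv K i) ^ n

lemma wit_isHomogeneous : (wit K n).IsHomogeneous (n * n) := by
  have h : (∏ i : Fin n, xv K i : MvPolynomial (Fin n ⊕ Fin n) K).IsHomogeneous
      (∑ _i : Fin n, 1) :=
    IsHomogeneous.prod _ _ _ fun i _ => isHomogeneous_X K _
  rw [wit]
  simpa using h.pow n

lemma nzd_wit_pow (m : ℕ) : NZD (bi K (clq (Finset.univ : Finset (Fin n)))) (wit K n ^ m) :=
  ((NZD.prod _ fun i _ => nzd_xv_clq _ i).pow n).pow m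

lemma wit_mem_mIdeal (hn : 3 ≤ n) : wit K n ∈ mIdeal K (Fin n ⊕ Fin n) :=
  Ideal.pow_mem_of_mem _ (Ideal.mem_of_dvd _ (Finset.dvd_prod_of_mem _ (Finset.mem_univ _))
    (xv_mem_mIdeal (⟨0, by omega⟩ : Fin n))) n (by omega)

/-- Walking along the cycle from `i` to `j`, every intermediate vertex `a` costs a factor `x_a`. -/
lemma wit_mul_mem (hn : 3 ≤ n) {h : MvPolynomial (Fin n ⊕ Fin n) K}
    (hh : h ∈ bi K (clq (Finset.univ : Finset (Fin n)))) : wit K n * h ∈ bei K (cycleG n) := by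
  set v : Fin n := ⟨0, by omega⟩
  have hrot : ∀ i : Fin n, rot v i = i := fun i => by
    ext; simp [rot, v, Nat.mod_eq_of_lt i.2]
  have hlt : ∀ i j : Fin n, i ≤ j → wit K n * mnr K i j ∈ bei K (cycleG n) := fun i j hij => by
    rw [Fin.le_def] at hij
    have h1 := pow_mul_mnr_mem (K := K) (rot v) (J := bei K (cycleG n)) (e := n)
      (f := ∏ i : Fin n, xv K i) (fun a => Finset.dvd_prod_of_mem _ (Finset.mem_univ a))
      (fun t _ => mnr_mem_bei (cycleG_adj_rot hn v t)) (j - i) i (by omega)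
    rw [Nat.add_sub_cancel' hij, hrot, hrot] at h1
    have h2 : wit K n = (∏ i : Fin n, xv K i) ^ (n - (j - i : ℕ)) *
        (∏ i : Fin n, xv K i) ^ (j - i : ℕ) := by
      rw [wit, ← pow_add, Nat.sub_add_cancel (by omega)]
    rw [h2, mul_assoc]
    exact Ideal.mul_mem_left _ _ h1
  refine mul_mem_of_edges (fun i j _ => ?_) hh
  rcases le_total i j with hij | hij
  · exact hlt i j hij
  · rw [mnr_swap, mul_neg]
    exact neg_mem (hlt j i hij)

/-- Modulo the prime ideal `P` of the complete graph the witness is regular, and it multiplies `P`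
into `I_C`; hence `P ∩ (I_C + (F^m)) = I_C`. -/
lemma clq_inf_eq (hn : 3 ≤ n) {m : ℕ} (hm : 1 ≤ m) :
    bi K (clq (Finset.univ : Finset (Fin n))) ⊓ (bei K (cycleG n) ⊔ Ideal.span {wit K n ^ m}) =
      bei K (cycleG n) := by
  refine le_antisymm ?_ (le_inf (bei_le_clq _) le_sup_left)
  rintro h ⟨hP, hJ⟩
  obtain ⟨y, hy⟩ := mem_sup_span_singleton.1 hJ
  have h1 : wit K n ^ m * y ∈ bi K (clq (Finset.univ : Finset (Fin n))) := by
    have := sub_mem hP (bei_le_clq _ hy)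
    rwa [sub_sub_cancel] at this
  have h2 := wit_mul_mem hn (nzd_wit_pow m y h1)
  obtain ⟨k, rfl⟩ := Nat.exists_eq_add_of_le' hm
  have h3 : h = (h - wit K n ^ (k + 1) * y) + wit K n ^ k * (wit K n * y) := by ring
  rw [h3]
  exact add_mem hy (Ideal.mul_mem_left _ _ h2)

lemma clq_sup_eq (m : ℕ) :
    bi K (clq (Finset.univ : Finset (Fin n))) ⊔ (bei K (cycleG n) ⊔ Ideal.span {wit K n ^ m}) =
      bi K (clq (Finset.univ : Finset (Fin n))) ⊔ Ideal.span {wit K n ^ m} := by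
  rw [← sup_assoc, sup_eq_left.2 (bei_le_clq _)]

lemma depthGE_clq_univ (hn : 3 ≤ n) : DepthGE (mIdeal K (Fin n ⊕ Fin n)) (n + 1)
    (MvPolynomial (Fin n ⊕ Fin n) K ⧸ bi K (clq (Finset.univ : Finset (Fin n)))) :=
  depthGE_clq ⟨⟨0, by omega⟩, Finset.mem_univ _⟩ (by simp; omega)

/-- The Mayer-Vietoris sequence of `P` and `I_C + (F^m)`: the intersection is `I_C`, and
the sum is `P + (F^m)`. -/
lemma depthGE_sup (hn : 3 ≤ n) {m : ℕ} (hm : 1 ≤ m) : DepthGE (mIdeal K (Fin n ⊕ Fin n)) n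
    (MvPolynomial (Fin n ⊕ Fin n) K ⧸ (bei K (cycleG n) ⊔ Ideal.span {wit K n ^ m})) := by
  refine DepthGE.of_inf (I₁ := bi K (clq (Finset.univ : Finset (Fin n)))) ?_ ?_
  · rw [clq_inf_eq hn hm]
    exact depthGE_cycleG hn
  · rw [clq_sup_eq]
    exact (nzd_wit_pow m).depth_quot (depthGE_clq_univ hn)

/-- A prime containing `I_C` and the witness contains either both variables of some vertex, or
the ideal of the complete graph together with the witness. -/
lemma dim_sup_le (hn : 3 ≤ n) (m : ℕ) : ringKrullDim (MvPolynomial (Fin n ⊕ Fin n) K ⧸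
    (bei K (cycleG n) ⊔ Ideal.span {wit K n ^ m})) ≤ n := by
  refine dim_le_of_primes fun Q hQ hJ => ?_
  have hC : bei K (cycleG n) ≤ Q := le_sup_left.trans hJ
  by_cases hv : ∃ a : Fin n, xv K a ∈ Q ∧ yv K a ∈ Q
  · obtain ⟨a, hx, hy⟩ := hv
    exact ⟨_, kill_le hC hx hy, dim_kill_cycleG_le hn a⟩
  · simp only [not_exists, not_and_or] at hv
    refine ⟨bi K (clq (Finset.univ : Finset (Fin n))) ⊔ Ideal.span {wit K n ^ m},
      sup_le (bi_le fun i j _ => ?_) (le_sup_right.trans hJ), ?_⟩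
    · set v : Fin n := ⟨0, by omega⟩
      have hrot : ∀ i : Fin n, rot v i = i := fun i => by
        ext; simp [rot, v, Nat.mod_eq_of_lt i.2]
      have hlt : ∀ i j : Fin n, i ≤ j → mnr K i j ∈ Q := fun i j hij => by
        rw [Fin.le_def] at hij
        have h1 := mnr_mem_of_prime (rot v) hQ hv (e := n)
          (fun t _ => hC (mnr_mem_bei (cycleG_adj_rot hn v t))) (j - i) i (by omega)
        rwa [Nat.add_sub_cancel' hij, hrot, hrot] at h1
      rcases le_total i j with hij | hij
      · exact hlt i j hij
      · rw [mnr_swap]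
        exact neg_mem (hlt j i hij)
    · have h := (nzd_wit_pow (K := K) (n := n) m).dim_quot.trans
        ((dim_anti (bei_le_clq (cycleG n))).trans (dim_cycleG_le hn))
      exact natCast_le_of_add_le (a := 1) (by exact_mod_cast h) rfl

end approximatelyCM

/-- Let `C` be the cycle of length `n ≥ 3` on `[n]` and `I_C` its
binomial edge ideal.  Then `S/I_C` is approximately Cohen-Macaulay; in particular
`depth(S/I_C) ≥ n` and `dim(S/I_C) = n + 1`. -/
theorem statement13 (K : Type) [Field K] (n : ℕ) (hn : 3 ≤ n) :
    IsACM K (bei K (cycleG n)) ∧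
    (n : ℕ∞) ≤ depth (mIdeal K (Fin n ⊕ Fin n))
      (MvPolynomial (Fin n ⊕ Fin n) K ⧸ bei K (cycleG n)) ∧
    ringKrullDim (MvPolynomial (Fin n ⊕ Fin n) K ⧸ bei K (cycleG n)) =
      (n + 1 : ℕ) := by
  have htop := mIdeal_ne_top (K := K) (Fin n ⊕ Fin n)
  have hle : bei K (cycleG n) ≤ mIdeal K (Fin n ⊕ Fin n) :=
    (bei_le_clq _).trans (bi_le_mIdeal _)
  have hdim : ringKrullDim (MvPolynomial (Fin n ⊕ Fin n) K ⧸ bei K (cycleG n)) =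
      (n + 1 : ℕ) :=
    le_antisymm (dim_cycleG_le hn)
      ((le_dim htop (bi_le_mIdeal _) (depthGE_clq_univ hn)).trans (dim_anti (bei_le_clq _)))
  refine ⟨⟨n * n, wit K n, by positivity, wit_isHomogeneous, fun m hm => ?_⟩,
    le_depth htop hle (depthGE_cycleG hn), hdim⟩
  have hJle : bei K (cycleG n) ⊔ Ideal.span {wit K n ^ m} ≤ mIdeal K (Fin n ⊕ Fin n) :=
    sup_le hle ((Ideal.span_singleton_le_iff_mem _).2
      (Ideal.pow_mem_of_mem _ (wit_mem_mIdeal hn) m hm))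
  have hd := dim_sup_le (K := K) hn m
  have hD : ringKrullDim (MvPolynomial (Fin n ⊕ Fin n) K ⧸
      (bei K (cycleG n) ⊔ Ideal.span {wit K n ^ m})) = (n : ℕ) :=
    le_antisymm hd (le_dim htop hJle (depthGE_sup hn hm))
  have hdep : depth (mIdeal K (Fin n ⊕ Fin n)) (MvPolynomial (Fin n ⊕ Fin n) K ⧸
      (bei K (cycleG n) ⊔ Ideal.span {wit K n ^ m})) = (n : ℕ) :=
    le_antisymm (depth_le_dim hd) (le_depth htop hJle (depthGE_sup hn hm))
  refine ⟨?_, ?_⟩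
  · rw [IsCMQuot, hdep, hD]
    rfl
  · rw [hD, hdim]
    norm_cast

end BEIPaper
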